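/- arXiv:2512.24870 — 12 statements merged into one kernel-verified Lean document; each statement's English description precedes it below -/
import Mathlib

section
/- Let R be a commutative Noetherian ring, let P be a prime ideal of R, let I be an ideal of R with I ⊆ P, and let x₁, …, xₙ be elements of R none of which lies in P. Suppose that (i) the ideals generated by the images of I and of P in the localization of R at the multiplicative submonoid generated by x₁, …, xₙ are equal, and (ii) I + ⟨xᵢ⟩ = P + ⟨xᵢ⟩ as ideals of R for each i = 1, …, n. Then I = P. -/
/-!
Since `xᵢ ∉ P` and `P` is prime, `P + ⟨xᵢ⟩ = I + ⟨xᵢ⟩` gives `P = I + xᵢ P`: if `p = a + xᵢ r`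
with `a ∈ I ⊆ P`, then `xᵢ r ∈ P`, so `r ∈ P`. Iterating, `P = I + s P` for every `s` in the
monoid generated by the `xᵢ`. Equality of the localized ideals, together with finite generation
of `P`, provides a single such `s` with `s P ⊆ I` (`exists_uniform_mul_mem`). Hence
`P = I + s P ⊆ I`.
-/

/-- If every element of a finitely generated ideal `N` is multiplied into `I` by some element of
the submonoid `M`, then one element of `M` works for all of `N`. -/
theorem exists_uniform_mul_mem {R : Type*} [CommRing R] (M : Submonoid R) (I N : Ideal R)
    (hN : N.FG) (h : ∀ p ∈ N, ∃ s ∈ M, s * p ∈ I) : ∃ s ∈ M, ∀ p ∈ N, s * p ∈ I := by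
  obtain ⟨t, rfl⟩ := hN
  have h' : ∀ p : t, ∃ s ∈ M, s * p.1 ∈ I := fun p => h p.1 (Submodule.subset_span p.2)
  choose f hfM hfI using h'
  refine ⟨∏ p, f p, Submonoid.prod_mem _ fun p _ => hfM p, fun p hp => ?_⟩
  induction hp using Submodule.span_induction with
  | mem y hy =>
    obtain ⟨c, hc⟩ := Finset.dvd_prod_of_mem f (Finset.mem_univ (⟨y, hy⟩ : t))
    rw [hc, mul_right_comm]
    exact I.mul_mem_right c (hfI ⟨y, hy⟩)
  | zero => simp
  | add y z _ _ hy hz => rw [mul_add]; exact I.add_mem hy hz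
  | smul a y _ hy => rw [smul_eq_mul, mul_left_comm]; exact I.mul_mem_left a hy

/-- Lemma on localizations and prime ideals (Lemma 9.2 of the paper):
if a Noetherian commutative ring `R` has an ideal `I` contained in a prime `P`,
elements `x₁, …, xₙ` outside `P` such that `I` and `P` generate the same ideal in the
localization of `R` at the multiplicative submonoid generated by the `xᵢ`, and
`I + ⟨xᵢ⟩ = P + ⟨xᵢ⟩` for each `i`, then `I = P`. -/
theorem localization_ideal_eq_of_prime {R : Type*} [CommRing R] [IsNoetherianRing R]
    (I P : Ideal R) (hP : P.IsPrime) (hIP : I ≤ P)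
    {n : ℕ} (x : Fin n → R) (hx : ∀ i, x i ∉ P)
    (hloc :
      Ideal.map (algebraMap R (Localization (Submonoid.closure (Set.range x)))) I =
      Ideal.map (algebraMap R (Localization (Submonoid.closure (Set.range x)))) P)
    (hsum : ∀ i, I ⊔ Ideal.span {x i} = P ⊔ Ideal.span {x i}) :
    I = P := by
  have hdecomp : ∀ s ∈ Submonoid.closure (Set.range x),
      ∀ p ∈ P, ∃ a ∈ I, ∃ q ∈ P, p = a + s * q := by
    intro s hs
    induction hs using Submonoid.closure_induction with
    | mem s hs =>
      obtain ⟨i, rfl⟩ := hs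
      intro p hp
      have hp' : p ∈ I ⊔ Ideal.span {x i} := hsum i ▸ Ideal.mem_sup_left hp
      obtain ⟨a, ha, b, hb, rfl⟩ := Submodule.mem_sup.1 hp'
      obtain ⟨r, rfl⟩ := Ideal.mem_span_singleton'.1 hb
      have hr : r * x i ∈ P := (P.add_mem_iff_right (hIP ha)).1 hp
      exact ⟨a, ha, r, (hP.mem_or_mem hr).resolve_right (hx i), by ring⟩
    | one => exact fun p hp => ⟨0, I.zero_mem, p, hp, by ring⟩
    | mul s t _ _ hs ht =>
      intro p hp
      obtain ⟨a, ha, q, hq, rfl⟩ := hs p hp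
      obtain ⟨b, hb, r, hr, rfl⟩ := ht q hq
      exact ⟨a + s * b, I.add_mem ha (I.mul_mem_left s hb), r, hr, by ring⟩
  obtain ⟨s, hs, hsP⟩ := exists_uniform_mul_mem (Submonoid.closure (Set.range x)) I P
    (IsNoetherian.noetherian P) (fun p hp => by
      have hmem := Ideal.mem_map_of_mem
        (algebraMap R (Localization (Submonoid.closure (Set.range x)))) hp
      rw [← hloc] at hmem
      exact (IsLocalization.algebraMap_mem_map_algebraMap_iff
        (Submonoid.closure (Set.range x)) _ I p).1 hmem)
  refine le_antisymm hIP fun p hp => ?_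
  obtain ⟨a, ha, q, hq, rfl⟩ := hdecomp s hs p hp
  exact I.add_mem ha (hsP q hq)
end

section
/- In the polynomial ring ℂ[u₁,u₂,u₃,u₄,u₅] in five variables, the ideal generated by the three polynomials u₁ + u₃u₄ − 1, u₁u₂ + u₂u₃u₄ + u₄u₅ − 1, u₂u₃ + u₅ − 1 is equal to the ideal generated by the five polynomials u₁ + u₃u₄ − 1, u₂ + u₄u₅ − 1, u₃ + u₁u₅ − 1, u₄ + u₁u₂ − 1, u₅ + u₂u₃ − 1. -/
/-!
Write `F₁, F₂, F₃` and `U₁, …, U₅` for the generators of the two ideals, in order, and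
`u₁, …, u₅` for `X 0, …, X 4`. Then `F₁ = U₁`, `F₃ = U₅`, and the remaining generators are
explicit combinations: `F₂ = U₂ + u₂ U₁`, `U₂ = F₂ - u₂ F₁`, `U₄ = F₂ - u₄ F₃` and
`U₃ = (u₂ u₃ + u₅) F₁ - u₃ F₂ + F₃`.
-/

open MvPolynomial

/-- For the path algebra of the A₂ quiver `1 → 2`, the ideal generated by the
F̂-equation relations equals the ideal generated by the u-equation relations,
i.e. `M̃_Λ = Ũ_Λ`.  Variables: `X 0 = u_{P₁}`, `X 1 = u_{P₂}`, `X 2 = u_{S₂}`,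
`X 3 = u_{ΣP₁}`, `X 4 = u_{ΣP₂}`. -/
theorem a2_Fhat_ideal_eq_u_ideal :
    (Ideal.span
      {(X 0 + X 2 * X 3 - 1 : MvPolynomial (Fin 5) ℂ),
       X 0 * X 1 + X 1 * X 2 * X 3 + X 3 * X 4 - 1,
       X 1 * X 2 + X 4 - 1}) =
    Ideal.span
      {(X 0 + X 2 * X 3 - 1 : MvPolynomial (Fin 5) ℂ),
       X 1 + X 3 * X 4 - 1,
       X 2 + X 0 * X 4 - 1,
       X 3 + X 0 * X 1 - 1,
       X 4 + X 1 * X 2 - 1} := by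
  apply le_antisymm
  · rw [Ideal.span_le]
    set J := Ideal.span
      {(X 0 + X 2 * X 3 - 1 : MvPolynomial (Fin 5) ℂ),
       X 1 + X 3 * X 4 - 1,
       X 2 + X 0 * X 4 - 1,
       X 3 + X 0 * X 1 - 1,
       X 4 + X 1 * X 2 - 1} with hJ
    have h1 : X 0 + X 2 * X 3 - 1 ∈ J := Ideal.subset_span (by simp)
    have h2 : X 1 + X 3 * X 4 - 1 ∈ J := Ideal.subset_span (by simp)
    have h5 : X 4 + X 1 * X 2 - 1 ∈ J := Ideal.subset_span (by simp)
    rintro p (rfl | rfl | rfl) <;> rw [SetLike.mem_coe]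
    · exact h1
    · -- `F₂ = U₂ + u₂ U₁`
      convert J.add_mem h2 (J.mul_mem_left (X 1) h1) using 1
      ring
    · rwa [add_comm (X 1 * X 2)]
  · rw [Ideal.span_le]
    set I := Ideal.span
      {(X 0 + X 2 * X 3 - 1 : MvPolynomial (Fin 5) ℂ),
       X 0 * X 1 + X 1 * X 2 * X 3 + X 3 * X 4 - 1,
       X 1 * X 2 + X 4 - 1} with hI
    have h1 : X 0 + X 2 * X 3 - 1 ∈ I := Ideal.subset_span (by simp)
    have h2 : X 0 * X 1 + X 1 * X 2 * X 3 + X 3 * X 4 - 1 ∈ I :=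
      Ideal.subset_span (by simp)
    have h3 : X 1 * X 2 + X 4 - 1 ∈ I := Ideal.subset_span (by simp)
    rintro p (rfl | rfl | rfl | rfl | rfl) <;> rw [SetLike.mem_coe]
    · exact h1
    · -- `U₂ = F₂ - u₂ F₁`
      convert I.sub_mem h2 (I.mul_mem_left (X 1) h1) using 1
      ring
    · -- `U₃ = (u₂ u₃ + u₅) F₁ - u₃ F₂ + F₃`
      convert I.add_mem (I.sub_mem (I.mul_mem_left (X 1 * X 2 + X 4) h1)
        (I.mul_mem_left (X 2) h2)) h3 using 1
      ring
    · -- `U₄ = F₂ - u₄ F₃`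
      convert I.sub_mem h2 (I.mul_mem_left (X 3) h3) using 1
      ring
    · rwa [add_comm (X 4)]
end

section
/- In the polynomial ring ℂ[u₁,u₂,u₃,u₄,u₅,u₆] in six variables, the ideal generated by the four polynomials u₁u₂u₄ + u₁u₃u₆ + u₄u₅u₆ − 1, u₁u₂u₃ + u₂u₄u₅ + u₃u₅u₆ − 1, u₁u₃ + u₄u₅ − 1, u₂u₄ + u₃u₆ − 1 is equal to the ideal generated by the six polynomials u₁ + u₄u₅u₆ − 1, u₂ + u₃u₅u₆ − 1, u₃ + u₂u₄²u₅ − 1, u₄ + u₁u₃²u₆ − 1, u₅ + u₁u₂u₃ − 1, u₆ + u₁u₂u₄ − 1. -/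
open MvPolynomial

/-!
Both inclusions are statements about solutions in an arbitrary commutative ring, applied to the
classes of the variables in the quotient by the ideal on the other side.

Write `x = ac + de - 1` and `y = bd + cf - 1` for the two quadratic F̂-relations. The u-relations
are simple combinations of `x`, `y` and the two cubic F̂-relations. Conversely, modulo the
u-relations, one finds `f x = a y`, `x = -de y` and `y = -cf x`. These force `x = y`, hence
`de x = -x` and `f x = a x`; multiplying `a + def - 1 = 0` by `x` then leaves `x = 0`.
The cubic F̂-relations follow from `x = y = 0`.
-/

lemma u_relations_of_Fhat {R : Type*} [CommRing R] {a b c d e f : R}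
    (h₁ : a * b * d + a * c * f + d * e * f - 1 = 0)
    (h₂ : a * b * c + b * d * e + c * e * f - 1 = 0)
    (h₃ : a * c + d * e - 1 = 0) (h₄ : b * d + c * f - 1 = 0) :
    a + d * e * f - 1 = 0 ∧ b + c * e * f - 1 = 0 ∧ c + b * d ^ 2 * e - 1 = 0 ∧
      d + a * c ^ 2 * f - 1 = 0 ∧ e + a * b * c - 1 = 0 ∧ f + a * b * d - 1 = 0 := by
  refine ⟨?_, ?_, ?_, ?_, ?_, ?_⟩
  · linear_combination h₁ - a * h₄
  · linear_combination h₂ - b * h₃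
  · linear_combination d * e * h₄ + (1 - c * f) * h₃ + c * (a * h₄ - h₁ + f * h₃)
  · linear_combination c * f * h₃ + (1 - d * e) * h₄ + d * (b * h₃ - h₂ + e * h₄)
  · linear_combination h₂ - e * h₄
  · linear_combination h₁ - f * h₃

lemma Fhat_relations_of_u {R : Type*} [CommRing R] {a b c d e f : R}
    (h₁ : a + d * e * f - 1 = 0) (h₂ : b + c * e * f - 1 = 0)
    (h₃ : c + b * d ^ 2 * e - 1 = 0) (h₄ : d + a * c ^ 2 * f - 1 = 0)
    (h₅ : e + a * b * c - 1 = 0) (h₆ : f + a * b * d - 1 = 0) :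
    a * b * d + a * c * f + d * e * f - 1 = 0 ∧ a * b * c + b * d * e + c * e * f - 1 = 0 ∧
      a * c + d * e - 1 = 0 ∧ b * d + c * f - 1 = 0 := by
  obtain ⟨x, hx⟩ : ∃ x, x = a * c + d * e - 1 := ⟨_, rfl⟩
  obtain ⟨y, hy⟩ : ∃ y, y = b * d + c * f - 1 := ⟨_, rfl⟩
  have hfx : f * x = a * y := by
    rw [hx, hy]; linear_combination h₁ - h₆
  have hbx : b * x = e * y := by
    rw [hx, hy]; linear_combination h₅ - h₂
  have hxy : x + d * e * y = 0 := by
    rw [hx, hy]; linear_combination h₃ + c * h₁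
  have hyx : y + c * f * x = 0 := by
    rw [hx, hy]; linear_combination h₄ + d * h₂
  -- `ac y = cf x = -y` and `bd x = de y = -x`; substitute `ac = x + 1 - de`, `bd = y + 1 - cf`.
  have hy2 : 2 * y + x * y + x = 0 := by
    linear_combination hyx - c * hfx + y * hx + hxy
  have hx2 : 2 * x + x * y + y = 0 := by
    linear_combination hxy + d * hbx + x * hy + hyx
  have hxeq : x = y := by linear_combination hx2 - hy2
  have hx0 : x = 0 := by
    subst hxeq
    linear_combination f * hxy - x * h₁ - hfx
  have hy0 : y = 0 := hxeq ▸ hx0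
  rw [hx] at hx0
  rw [hy] at hy0
  refine ⟨?_, ?_, hx0, hy0⟩
  · linear_combination h₁ + a * hy0
  · linear_combination h₂ + b * hx0

/-- For the preprojective algebra `Π_{A₂}`, the ideal generated by the
F̂-equation relations equals the ideal generated by the u-equation relations,
i.e. `M̃_Λ = Ũ_Λ`.  Variables: `X 0 = u_{P₁}`, `X 1 = u_{P₂}`, `X 2 = u_{S₁}`,
`X 3 = u_{S₂}`, `X 4 = u_{ΣP₁}`, `X 5 = u_{ΣP₂}`. -/
theorem preprojectiveA2_Fhat_ideal_eq_u_ideal :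
    (Ideal.span
      {(X 0 * X 1 * X 3 + X 0 * X 2 * X 5 + X 3 * X 4 * X 5 - 1 : MvPolynomial (Fin 6) ℂ),
       X 0 * X 1 * X 2 + X 1 * X 3 * X 4 + X 2 * X 4 * X 5 - 1,
       X 0 * X 2 + X 3 * X 4 - 1,
       X 1 * X 3 + X 2 * X 5 - 1}) =
    Ideal.span
      {(X 0 + X 3 * X 4 * X 5 - 1 : MvPolynomial (Fin 6) ℂ),
       X 1 + X 2 * X 4 * X 5 - 1,
       X 2 + X 1 * X 3 ^ 2 * X 4 - 1,
       X 3 + X 0 * X 2 ^ 2 * X 5 - 1,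
       X 4 + X 0 * X 1 * X 2 - 1,
       X 5 + X 0 * X 1 * X 3 - 1} := by
  apply le_antisymm
  · set J := Ideal.span {(X 0 + X 3 * X 4 * X 5 - 1 : MvPolynomial (Fin 6) ℂ),
       X 1 + X 2 * X 4 * X 5 - 1, X 2 + X 1 * X 3 ^ 2 * X 4 - 1, X 3 + X 0 * X 2 ^ 2 * X 5 - 1,
       X 4 + X 0 * X 1 * X 2 - 1, X 5 + X 0 * X 1 * X 3 - 1} with hJ
    let v (i : Fin 6) : MvPolynomial (Fin 6) ℂ ⧸ J := Ideal.Quotient.mk J (X i)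
    have mem {p : MvPolynomial (Fin 6) ℂ} (hp : p ∈ J) := Ideal.Quotient.eq_zero_iff_mem.mpr hp
    obtain ⟨k₁, k₂, k₃, k₄⟩ := Fhat_relations_of_u (a := v 0) (b := v 1) (c := v 2) (d := v 3)
      (e := v 4) (f := v 5)
      (mem (Ideal.subset_span (by simp))) (mem (Ideal.subset_span (by simp)))
      (mem (Ideal.subset_span (by simp))) (mem (Ideal.subset_span (by simp)))
      (mem (Ideal.subset_span (by simp))) (mem (Ideal.subset_span (by simp)))
    rw [Ideal.span_le]
    rintro p (rfl | rfl | rfl | rfl)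
    exacts [Ideal.Quotient.eq_zero_iff_mem.mp k₁, Ideal.Quotient.eq_zero_iff_mem.mp k₂,
      Ideal.Quotient.eq_zero_iff_mem.mp k₃, Ideal.Quotient.eq_zero_iff_mem.mp k₄]
  · set J := Ideal.span
      {(X 0 * X 1 * X 3 + X 0 * X 2 * X 5 + X 3 * X 4 * X 5 - 1 : MvPolynomial (Fin 6) ℂ),
       X 0 * X 1 * X 2 + X 1 * X 3 * X 4 + X 2 * X 4 * X 5 - 1,
       X 0 * X 2 + X 3 * X 4 - 1, X 1 * X 3 + X 2 * X 5 - 1} with hJ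
    let v (i : Fin 6) : MvPolynomial (Fin 6) ℂ ⧸ J := Ideal.Quotient.mk J (X i)
    have mem {p : MvPolynomial (Fin 6) ℂ} (hp : p ∈ J) := Ideal.Quotient.eq_zero_iff_mem.mpr hp
    obtain ⟨k₁, k₂, k₃, k₄, k₅, k₆⟩ := u_relations_of_Fhat (a := v 0) (b := v 1) (c := v 2)
      (d := v 3) (e := v 4) (f := v 5)
      (mem (Ideal.subset_span (by simp))) (mem (Ideal.subset_span (by simp)))
      (mem (Ideal.subset_span (by simp))) (mem (Ideal.subset_span (by simp)))
    rw [Ideal.span_le]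
    rintro p (rfl | rfl | rfl | rfl | rfl | rfl)
    exacts [Ideal.Quotient.eq_zero_iff_mem.mp k₁, Ideal.Quotient.eq_zero_iff_mem.mp k₂,
      Ideal.Quotient.eq_zero_iff_mem.mp k₃, Ideal.Quotient.eq_zero_iff_mem.mp k₄,
      Ideal.Quotient.eq_zero_iff_mem.mp k₅, Ideal.Quotient.eq_zero_iff_mem.mp k₆]
end

section
/- In the polynomial ring over ℂ in nine variables uP1, uP2, uS1, uS2, uI1, u12, u112, uQ1, uQ2, the ideal generated by the seven polynomials (F̂-relations): uP1²·uS1·u112 + uP1·uS1·uS2·uI1·u12·u112·uQ1 + uS1·uS2²·uI1²·u12²·u112·uQ1² − 1; uP1²·uP2·uS1·u112 + uS1·uS2·u12·uQ1²·uQ2 + uP1·uP2·uS1·uS2·uI1·u12·u112·uQ1 + uP2·uS1·uS2²·uI1²·u12²·u112·uQ1² − 1; uP1·uS1·u112 + uS1·uS2·uI1·u12·u112·uQ1 − 1; uQ2 + uP2·uS2·uI1²·u12·u112 − 1; uS1·u12·uQ1²·uQ2² + uP1·uP2·uS1·uI1·u12·u112·uQ1·uQ2 + uP1²·uP2²·uS1·uI1²·u12·u112²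 + 2·uP2·uS1·uS2·uI1²·u12²·u112·uQ1²·uQ2 + uP1·uP2²·uS1·uS2·uI1³·u12²·u112²·uQ1 + uP2²·uS1·uS2²·uI1⁴·u12³·u112²·uQ1² − 1; uS1·u12·uQ1·uQ2 + uP1·uP2·uS1·uI1·u12·u112 + uP2·uS1·uS2·uI1²·u12²·u112·uQ1 − 1; uP1·uS1·u12·u112·uQ1·uQ2 + uP1²·uP2·uS1·uI1·u12·u112² + uS1·uS2·uI1·u12²·u112·uQ1²·uQ2 + uP1·uP2·uS1·uS2·uI1²·u12²·u112²·uQ1 + uP2·uS1·uS2²·uI1³·u12³·u112²·uQ1² − 1; is equal to the ideal generated by the nine polynomials (u-relations): uP1 + uS1·uS2²·uI1²·u12²·u112·uQ1² − 1; uP2 + uS1·uS2·u12·uQ1²·uQ2 − 1; uS1 + uP1·uP2·uS1²·uS2·uI1²·u12²·u112²·uQ1 − 1; uS2 + uP1²·uP2·uS1·u112·uQ2 − 1; uI1 + uP1²·uS1²·u12·u112·uQ1²·uQ2² − 1; u12 + uP1²·uP2·uS1²·uI1·u12²·u112²·uQ1·uQ2 − 1; u112 + uP1·uS1²·uS2·uI1·u12²·u112²·uQ1²·uQ2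 − 1; uQ1 + uP1²·uP2²·uS1·uI1²·u12·u112² − 1; uQ2 + uP2·uS2·uI1²·u12·u112 − 1. -/
/-!
Write `p, q, s, t, i, a, b, x, y` for the nine variables in the order of their definition. Two ideals
agree as soon as they are contained in the same ideals `I`, so it suffices to show that in any
commutative ring the two systems of equations are equivalent. Both are equivalent to the smaller
system `Core`, in terms of `m = t i a x` and `n = p q i b`:
`s b (p + m) = 1`, `p + s b m² = 1`, `s a (x + n) = 1`, `x + s a n² = 1`, `a (x y + q i b) = 1`,
`q + s t a x² y = 1`, `y + q t i² a b = 1`.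

For the `F̂`-relations this is a triangular change of generators (`F_iff_core`). From `Core` one gets
`p² + p m + m² = p + m`, `x² + x n + n² = x + n` and `m n = p x (1 - y)`, and `s b`, `s a`, `s a b`
have the inverses `p + m`, `x + n`, `x p + x m + n p`. After clearing these units most `u`-relations
become consequences of the two quadratic equations; those for `i` and `t` follow by showing that a
defect is annihilated by elements generating the unit ideal. Conversely (`core_of_U`), the
`u`-relations make `s`, `a`, `b` units, and the defect `K` of the first `Core` relation satisfies a system of
polynomial equations forcing `K = 0`.
-/

open MvPolynomial

namespace A2LoopExample

/- The nine variables `u_X` for the algebra given by the quiver with vertices 1, 2,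
an arrow `a : 1 → 2` and a loop `x` at 1, modulo `x² = 0`. -/
noncomputable def uP1 : MvPolynomial (Fin 9) ℂ := X 0
noncomputable def uP2 : MvPolynomial (Fin 9) ℂ := X 1
noncomputable def uS1 : MvPolynomial (Fin 9) ℂ := X 2
noncomputable def uS2 : MvPolynomial (Fin 9) ℂ := X 3
noncomputable def uI1 : MvPolynomial (Fin 9) ℂ := X 4
noncomputable def u12 : MvPolynomial (Fin 9) ℂ := X 5
noncomputable def u112 : MvPolynomial (Fin 9) ℂ := X 6
noncomputable def uQ1 : MvPolynomial (Fin 9) ℂ := X 7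
noncomputable def uQ2 : MvPolynomial (Fin 9) ℂ := X 8

section
variable {R : Type*} [CommRing R]

/-- The relations to which both systems reduce, with `p, q, s, t, i, a, b, x, y` standing for
`uP1, uP2, uS1, uS2, uI1, u12, u112, uQ1, uQ2`. The two auxiliary elements `m = t i a x` and
`n = p q i b` are carried as parameters with defining equations. -/
structure Core (p q s t i a b x y m n : R) : Prop where
  hm : m = t * i * a * x
  hn : n = p * q * i * b
  c1 : s * b * (p + m) = 1
  c2 : p + s * b * m ^ 2 = 1
  c3 : q + s * t * a * x ^ 2 * y = 1
  c4 : y + q * t * i ^ 2 * a * b = 1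
  c5 : s * a * (x + n) = 1
  c6 : x + s * a * n ^ 2 = 1
  c7 : a * (x * y + q * i * b) = 1

variable {p q s t i a b x y m n : R}

namespace Core

theorem quadP (h : Core p q s t i a b x y m n) : p ^ 2 + p * m + m ^ 2 = p + m := by
  linear_combination (p + m) * h.c2 - m ^ 2 * h.c1

theorem quadX (h : Core p q s t i a b x y m n) : x ^ 2 + x * n + n ^ 2 = x + n := by
  linear_combination (x + n) * h.c6 - n ^ 2 * h.c5

theorem mqib (h : Core p q s t i a b x y m n) : m * (q * i * b) = x * (1 - y) := by
  rw [h.hm]; linear_combination x * h.c4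

theorem mn (h : Core p q s t i a b x y m n) : m * n = p * x * (1 - y) := by
  rw [h.hn]; linear_combination p * h.mqib

/-- The element `D = x p + x m + n p` is the inverse of `s a b`. -/
theorem sabD (h : Core p q s t i a b x y m n) :
    s * a * b * (x * p + x * m + n * p) = 1 := by
  have hD : (p + m) * (x * y + q * i * b) = x * p + x * m + n * p := by
    linear_combination (p + m) * h.mqib - q * i * b * h.quadP - p * h.hn
  linear_combination (a * (x * y + q * i * b)) * h.c1 + h.c7 - s * a * b * hD

theorem relS1 (h : Core p q s t i a b x y m n) : s + s ^ 2 * a * b * (m * n) = 1 := by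
  linear_combination s * a * (x + n) * h.c1 + h.c5 - s * h.sabD

theorem relU112 (h : Core p q s t i a b x y m n) :
    b + s ^ 2 * a * b ^ 2 * (m * (p * x * y)) = 1 := by
  have w : (x + n) * (p + m) + m * (p * x * y) = (p + m) * (x * p + x * m + n * p) := by
    linear_combination (-x - n) * h.quadP + m * h.mn
  linear_combination s ^ 2 * a * b ^ 2 * w + (s * a * b * (x * p + x * m + n * p)) * h.c1
    + h.sabD - b * (s * a * (x + n)) * h.c1 - b * h.c5

theorem relU12 (h : Core p q s t i a b x y m n) :
    a + s ^ 2 * a ^ 2 * b * (n * (p * x * y)) = 1 := by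
  have w : (x + n) * (p + m) + n * (p * x * y) = (x + n) * (x * p + x * m + n * p) := by
    linear_combination (-p - m) * h.quadX + n * h.mn
  linear_combination s ^ 2 * a ^ 2 * b * w + (s * a * b * (x * p + x * m + n * p)) * h.c5
    + h.sabD - a * (s * a * (x + n)) * h.c1 - a * h.c5

theorem aD (h : Core p q s t i a b x y m n) : a * (x * p + x * m + n * p) = p + m := by
  linear_combination (p + m) * h.sabD - a * (x * p + x * m + n * p) * h.c1

theorem bD (h : Core p q s t i a b x y m n) : b * (x * p + x * m + n * p) = x + n := by
  linear_combination (x + n) * h.sabD - b * (x * p + x * m + n * p) * h.c5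

theorem mD (h : Core p q s t i a b x y m n) :
    m * (x * p + x * m + n * p) = t * i * x * (p + m) := by
  linear_combination t * i * x * h.aD + (x * p + x * m + n * p) * h.hm

theorem nD (h : Core p q s t i a b x y m n) :
    n * (x * p + x * m + n * p) = p * q * i * (x + n) := by
  linear_combination p * q * i * h.bD + (x * p + x * m + n * p) * h.hn

theorem relP2 (h : Core p q s t i a b x y m n) : (1 - q) * (x + n) = t * x ^ 2 * y := by
  linear_combination t * x ^ 2 * y * h.c5 - (x + n) * h.c3

/-- The difference of the two sides is annihilated by `p` and by `m`, hence vanishes because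
`p + m` is a unit. -/
theorem iAB (h : Core p q s t i a b x y m n) :
    i * ((x + n) * (p + m)) = (m * x + p * n + m * n) * (x * p + x * m + n * p) := by
  have hp : p * (i * ((x + n) * (p + m)))
      = p * ((m * x + p * n + m * n) * (x * p + x * m + n * p)) := by
    linear_combination p * i * (p + m) * h.relP2 - p * x * y * h.mD - (p + m) * h.nD
      - (x * p + x * m + n * p) * (n * h.quadP - m * h.mn)
  have hq : m * (i * ((x + n) * (p + m)))
      = m * ((m * x + p * n + m * n) * (x * p + x * m + n * p)) := by
    linear_combination m * i * (p + m) * h.relP2 - m * x * y * h.mD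
      + (p + m) * (x * p + x * m + n * p) * h.mqib - (p + m) * m * q * i * h.bD
      - (x * p + x * m + n * p) * ((p + m) * h.mn + x * (1 - y) * h.quadP)
  linear_combination s * b * (hp + hq)
    - (i * ((x + n) * (p + m)) - (m * x + p * n + m * n) * (x * p + x * m + n * p)) * h.c1

theorem relI1AB (h : Core p q s t i a b x y m n) :
    (1 - i) * ((x + n) * (p + m)) = (p * x * y) ^ 2 := by
  have hE : p * x * y = p * x - m * n := by linear_combination h.mn
  rw [hE]
  linear_combination - h.iAB - (x ^ 2 + x * n + n ^ 2) * h.quadP - (p + m) * h.quadX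

theorem relI1 (h : Core p q s t i a b x y m n) :
    i + s ^ 2 * a * b * (p * x * y) ^ 2 = 1 := by
  linear_combination (1 - i) * (s * a * (x + n) * h.c1 + h.c5) - s ^ 2 * a * b * h.relI1AB

/-- The relation says that `Z = (1 - t) (p + m) - p² q y` vanishes. Both `x` and `n` annihilate
`i (x + n) Z`, so `i Z = 0` as `x + n` is a unit; also `p x² y Z = 0`. As `(x + n) (p + m)` is
`i (x + n) (p + m) + (p x y)²`, this unit annihilates `Z`. -/
theorem relS2 (h : Core p q s t i a b x y m n) : t + p ^ 2 * q * s * b * y = 1 := by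
  have hx : x * (i * (x + n) * ((1 - t) * (p + m) - p ^ 2 * q * y)) = 0 := by
    linear_combination x * h.iAB + (x + n) * h.mD + p * x * y * h.nD
      + (x * p + x * m + n * p) * (m * h.quadX - n * h.mn)
  have hG : (1 - y) * (x * p + x * m + n * p) = q * t * i * (m * x + p * n + m * n) := by
    have hD2 : (1 - y) * (x * p + x * m + n * p) ^ 2
        = q * t * i * (m * x + p * n + m * n) * (x * p + x * m + n * p) := by
      linear_combination q * t * i * h.iAB - (x * p + x * m + n * p) ^ 2 * h.c4
        + q * t * i ^ 2 * (b * (x * p + x * m + n * p) * h.aD + (p + m) * h.bD)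
    linear_combination s * a * b * hD2
      - ((1 - y) * (x * p + x * m + n * p) - q * t * i * (m * x + p * n + m * n)) * h.sabD
  have hn : n * (i * (x + n) * ((1 - t) * (p + m) - p ^ 2 * q * y)) = 0 := by
    linear_combination n * (1 - t) * h.iAB + p * y * n * h.nD
      - t * (m * x + p * n + m * n) * h.nD + p * (x + n) * hG
      + (x * p + x * m + n * p) * (p * h.quadX - p * y * h.quadX + (x + n) * h.mn)
  have hi : i * ((1 - t) * (p + m) - p ^ 2 * q * y) = 0 := by
    linear_combination (s * a) ^ 2 * (hx + hn)
      - (i * ((1 - t) * (p + m) - p ^ 2 * q * y)) * (s * a * (x + n) + 1) * h.c5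
  have hE : p * x ^ 2 * y * ((1 - t) * (p + m) - p ^ 2 * q * y) = 0 := by
    linear_combination (p + m) * p * h.relP2 + p * q * h.relI1AB - (p + m) * h.nD
      + (p + m) * (p * h.quadX + x * h.mn)
  have hZ : (1 - t) * (p + m) - p ^ 2 * q * y = 0 := by
    have : (x + n) * (p + m) * ((1 - t) * (p + m) - p ^ 2 * q * y) = 0 := by
      linear_combination (x + n) * (p + m) * hi + p * y * hE
        + ((1 - t) * (p + m) - p ^ 2 * q * y) * h.relI1AB
    linear_combination s ^ 2 * a * b * this
      - ((1 - t) * (p + m) - p ^ 2 * q * y) * (s * a * (x + n) * h.c1 + h.c5)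
  linear_combination (1 - t) * h.c1 - s * b * hZ

end Core

/-- Each `F̂`-relation is a combination of `Core` relations, and conversely; for instance the
fifth is `s a (X² + X n + n²) = 1` with `X = x (y + q t i² a b)`. -/
theorem F_iff_core :
    (p ^ 2 * s * b + p * s * t * i * a * b * x + s * t ^ 2 * i ^ 2 * a ^ 2 * b * x ^ 2 = 1 ∧
    p ^ 2 * q * s * b + s * t * a * x ^ 2 * y + p * q * s * t * i * a * b * x
      + q * s * t ^ 2 * i ^ 2 * a ^ 2 * b * x ^ 2 = 1 ∧
    p * s * b + s * t * i * a * b * x = 1 ∧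
    y + q * t * i ^ 2 * a * b = 1 ∧
    s * a * x ^ 2 * y ^ 2 + p * q * s * i * a * b * x * y
      + p ^ 2 * q ^ 2 * s * i ^ 2 * a * b ^ 2
      + 2 * q * s * t * i ^ 2 * a ^ 2 * b * x ^ 2 * y
      + p * q ^ 2 * s * t * i ^ 3 * a ^ 2 * b ^ 2 * x
      + q ^ 2 * s * t ^ 2 * i ^ 4 * a ^ 3 * b ^ 2 * x ^ 2 = 1 ∧
    s * a * x * y + p * q * s * i * a * b + q * s * t * i ^ 2 * a ^ 2 * b * x = 1 ∧
    p * s * a * b * x * y + p ^ 2 * q * s * i * a * b ^ 2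
      + s * t * i * a ^ 2 * b * x ^ 2 * y + p * q * s * t * i ^ 2 * a ^ 2 * b ^ 2 * x
      + q * s * t ^ 2 * i ^ 3 * a ^ 3 * b ^ 2 * x ^ 2 = 1) ↔
    Core p q s t i a b x y (t * i * a * x) (p * q * i * b) := by
  constructor
  · rintro ⟨F1, F2, F3, F4, F5, F6, F7⟩
    have c5 : s * a * (x + p * q * i * b) = 1 := by linear_combination F6 - s * a * x * F4
    refine ⟨rfl, rfl, ?_, ?_, ?_, F4, c5, ?_, ?_⟩
    · linear_combination F3
    · linear_combination F1 - p * F3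
    · linear_combination F2 - q * F1
    · linear_combination F5 - x * c5
        - s * a * (x ^ 2 * (y + q * t * i ^ 2 * a * b + 1) + p * q * i * b * x) * F4
    · linear_combination F7 - a * x * y * F3 - a * q * i * b * F1
  · rintro ⟨-, -, c1, c2, c3, c4, c5, c6, c7⟩
    refine ⟨?_, ?_, ?_, c4, ?_, ?_, ?_⟩
    · linear_combination c2 + p * c1
    · linear_combination c3 + q * (c2 + p * c1)
    · linear_combination c1
    · linear_combination c6 + x * c5
        + s * a * (x ^ 2 * (y + q * t * i ^ 2 * a * b + 1) + p * q * i * b * x) * c4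
    · linear_combination c5 + s * a * x * c4
    · linear_combination c7 + a * x * y * c1 + a * q * i * b * (c2 + p * c1)

/-- The `u`-relations give the `Core` relations. In terms of `α = s a`, `β = s b`, `M = β m`,
`N = α n`, `T = α β p x y`, the point is to show that the defect `K = 1 - M - N - T` vanishes:
`K = 0` turns `β = 1 - M (N + T)` into `β = 1 - M + M²`, which is `s b (p + m) = 1`. -/
theorem core_of_U
    (U1 : p + s * t ^ 2 * i ^ 2 * a ^ 2 * b * x ^ 2 = 1)
    (U2 : q + s * t * a * x ^ 2 * y = 1)
    (U3 : s + p * q * s ^ 2 * t * i ^ 2 * a ^ 2 * b ^ 2 * x = 1)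
    (U4 : t + p ^ 2 * q * s * b * y = 1)
    (U5 : i + p ^ 2 * s ^ 2 * a * b * x ^ 2 * y ^ 2 = 1)
    (U6 : a + p ^ 2 * q * s ^ 2 * i * a ^ 2 * b ^ 2 * x * y = 1)
    (U7 : b + p * s ^ 2 * t * i * a ^ 2 * b ^ 2 * x ^ 2 * y = 1)
    (U8 : x + p ^ 2 * q ^ 2 * s * i ^ 2 * a * b ^ 2 = 1)
    (U9 : y + q * t * i ^ 2 * a * b = 1) :
    Core p q s t i a b x y (t * i * a * x) (p * q * i * b) := by
  obtain ⟨m, hm⟩ : ∃ m, m = t * i * a * x := ⟨_, rfl⟩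
  obtain ⟨n, hn⟩ : ∃ n, n = p * q * i * b := ⟨_, rfl⟩
  obtain ⟨E, hE⟩ : ∃ E, E = p * x * y := ⟨_, rfl⟩
  obtain ⟨α, hα⟩ : ∃ α, α = s * a := ⟨_, rfl⟩
  obtain ⟨β, hβ⟩ : ∃ β, β = s * b := ⟨_, rfl⟩
  obtain ⟨M, hM⟩ : ∃ M, M = β * m := ⟨_, rfl⟩
  obtain ⟨N, hN⟩ : ∃ N, N = α * n := ⟨_, rfl⟩
  obtain ⟨T, hT⟩ : ∃ T, T = α * β * E := ⟨_, rfl⟩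
  obtain ⟨K, hK⟩ : ∃ K, K = 1 - M - N - T := ⟨_, rfl⟩
  rw [← hm, ← hn]
  obtain ⟨sInv, hsInv⟩ : ∃ sInv, s * sInv = 1 :=
    ⟨1 + p * q * s * t * i ^ 2 * a ^ 2 * b ^ 2 * x, by linear_combination U3⟩
  obtain ⟨aInv, haInv⟩ : ∃ aInv, a * aInv = 1 :=
    ⟨1 + p ^ 2 * q * s ^ 2 * i * a * b ^ 2 * x * y, by linear_combination U6⟩
  obtain ⟨bInv, hbInv⟩ : ∃ bInv, b * bInv = 1 :=
    ⟨1 + p * s ^ 2 * t * i * a ^ 2 * b * x ^ 2 * y, by linear_combination U7⟩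
  have hαInv : α * (sInv * aInv) = 1 := by rw [hα]; linear_combination a * aInv * hsInv + haInv
  have hβInv : β * (sInv * bInv) = 1 := by rw [hβ]; linear_combination b * bInv * hsInv + hbInv
  have hp : β * p = β - M ^ 2 := by
    rw [hM, hβ, hm]; linear_combination s * b * U1
  have hx : α * x = α - N ^ 2 := by
    rw [hN, hα, hn]; linear_combination s * a * U8
  have hs : s = 1 - M * N := by
    rw [hM, hN, hα, hβ, hm, hn]; linear_combination U3
  have hβM : β = 1 - M * (N + T) := by
    rw [hM, hN, hT, hα, hβ, hm, hn, hE]; linear_combination U3 + s * U7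
  have hαN : α = 1 - N * (M + T) := by
    rw [hM, hN, hT, hα, hβ, hm, hn, hE]; linear_combination U3 + s * U6
  have hTfac : T = (α - N ^ 2) * (β - M ^ 2) - M * N := by
    rw [← hp, ← hx, hT, hM, hN, hE, hm, hn]; linear_combination α * β * p * x * U9
  have hβK : β = 1 - M + M ^ 2 + M * K := by rw [hK]; linear_combination hβM
  have hαK : α = 1 - N + N ^ 2 + N * K := by rw [hK]; linear_combination hαN
  have hTK : T = 1 - M - N - K := by rw [hK]; ring
  -- Expressing `α`, `β`, `T` through `M`, `N`, `K` turns `hTfac` into a multiple of `K`.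
  have hΦ : K * (1 + M + N - 2 * M * N + M * N * K) = 0 := by
    rw [hαK, hβK] at hTfac
    linear_combination hTK - hTfac
  have hi : α * β * i = α * β - T ^ 2 := by
    rw [hT, hE, hα, hβ]; linear_combination s * a * s * b * U5
  have hip : s * a * b * i * p = N + α * E * M := by
    rw [hM, hN, hE, hα, hβ, hm, hn]; linear_combination - s * a * b * i * p * U2
  have hix : s * a * b * i * x = M + β * E * N := by
    rw [hM, hN, hE, hα, hβ, hm, hn]; linear_combination - s * a * b * i * x * U4
  have e1 : (α * β - T ^ 2) * (β - M ^ 2) = s * (β * N + T * M) := by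
    rw [← hi, ← hp, hT]
    linear_combination s * β * hip + β ^ 2 * i * p * hα + s * a * β * i * p * hβ
  have e2 : (α * β - T ^ 2) * (α - N ^ 2) = s * (α * M + T * N) := by
    rw [← hi, ← hx, hT]
    linear_combination s * α * hix + α ^ 2 * i * x * hβ + s * b * α * i * x * hα
  -- `α β (β - M²)` lies in the ideal generated by the cofactors of `K` in `hΦ` and `e1`.
  have hKP : K * (β - M ^ 2) = 0 := by
    have hαβ : α * β * (K * (β - M ^ 2)) = 0 := by
      rw [hs, hTK, hαK, hβK] at e1
      rw [hαK, hβK]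
      linear_combination e1 + (-1 + N + M - M * N - M ^ 2 + M ^ 2 * N
        + K * (1 - 2 * M + M * N + M ^ 2) + M * K ^ 2) * hΦ
    linear_combination sInv * aInv * (sInv * bInv) * hαβ
      - K * (β - M ^ 2) * (β * (sInv * bInv) * hαInv + hβInv)
  have hKp : K * p = 0 := by
    linear_combination sInv * bInv * (hKP + K * hp) - K * p * hβInv
  -- `N` and `T` are multiples of `p`, so `K` annihilates them.
  have hKN : K * N = 0 := by
    rw [hN, hn]; linear_combination α * q * i * b * hKp
  have hKT : K * T = 0 := by
    rw [hT, hE]; linear_combination α * β * x * y * hKp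
  have hKM : K * M = - K := by
    linear_combination hΦ - (1 - 2 * M + M * K) * hKN
  have hKK : K ^ 2 = 2 * K := by
    linear_combination K * hTK - hKT - hKN - hKM
  -- By `hKN`, `hKM`, `hKK` the equation `e2` collapses to `K (2 - M - K) = 0`, that is `K = 0`.
  have hK0 : K = 0 := by
    rw [hs, hTK, hαK, hβK] at e2
    linear_combination e2 + hKM + hKK
      - (-2 + 2 * N + M - N * M + K * (-M + 3 - N) - K ^ 2
        - M * (2 - 2 * N + 2 * N ^ 2 - M + M * N - N ^ 2 * M
          + K * (-1 - M * N + 3 * N - N ^ 2) - N * K ^ 2)) * hKN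
  rw [hK0] at hβK hαK hTK
  have c1 : β * (p + m) = 1 := by linear_combination hp - hM + hβK
  have c5 : α * (x + n) = 1 := by linear_combination hx - hN + hαK
  have c2 : p + s * b * m ^ 2 = 1 := by rw [hm]; linear_combination U1
  have c6 : x + s * a * n ^ 2 = 1 := by rw [hn]; linear_combination U8
  refine ⟨hm, hn, by rw [← hβ]; exact c1, c2, U2, U9, by rw [← hα]; exact c5, c6, ?_⟩
  have qP : p ^ 2 + p * m + m ^ 2 = p + m := by
    rw [← hβ] at c2
    linear_combination (p + m) * c2 - m ^ 2 * c1
  have qX : x ^ 2 + x * n + n ^ 2 = x + n := by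
    rw [← hα] at c6
    linear_combination (x + n) * c6 - n ^ 2 * c5
  have hmq : m * (q * i * b) = x * (1 - y) := by rw [hm]; linear_combination x * U9
  have hEm : E = p * x - m * n := by
    rw [hE, hn]; linear_combination p * hmq
  have hAB : α * β * ((x + n) * (p + m)) = 1 := by
    linear_combination α * (x + n) * c1 + c5
  have r1 : (x + n) * (p + m) * (E + n - p) = p * n * E := by
    rw [hEm]
    linear_combination p * (p + m) * qX - n * (x + n) * qP
  have r2 : (x + n) * (p + m) * (x - m) = E * (p * (x + n) + n * m) := by
    rw [hEm]
    linear_combination (p + m - p ^ 2) * qX + (n ^ 2 - x - n) * qP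
  have r3 : (p + m) * (m * (x * y) + x * (1 - y) - m) = - p * E + (p + m) * (x - m) := by
    rw [hE]; linear_combination x * y * qP
  -- The last relation is `U6` once `x y + q i b = 1 + α β n E`; the difference of the two sides is
  -- killed by `p` and by `m`, hence by the unit `p + m`.
  have hQp : (x + n) * (p + m) * (p * (x * y + q * i * b - (1 + α * β * n * E))) = 0 := by
    linear_combination r1 - p * n * E * hAB - (x + n) * (p + m) * (hE + hn)
  have hQm : (x + n) * (p + m) * (p + m) *
      (m * (x * y + q * i * b - (1 + α * β * n * E))) = 0 := by
    linear_combination (x + n) * (p + m) * r3 + (p + m) * r2 - (p + m) * m * n * E * hAB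
      + (x + n) * (p + m) * (p + m) * hmq
  have hQ : x * y + q * i * b = 1 + α * β * n * E := by
    linear_combination α * β * β ^ 2 * ((p + m) * hQp + hQm)
      - (x * y + q * i * b - (1 + α * β * n * E))
        * (β ^ 2 * (p + m) ^ 2 * hAB + (β * (p + m) + 1) * c1)
  have hU6 : a * (1 + α * β * n * E) = 1 := by
    rw [hα, hβ, hn, hE]; linear_combination U6
  rw [hQ, hU6]

theorem U_iff_core :
    (p + s * t ^ 2 * i ^ 2 * a ^ 2 * b * x ^ 2 = 1 ∧
    q + s * t * a * x ^ 2 * y = 1 ∧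
    s + p * q * s ^ 2 * t * i ^ 2 * a ^ 2 * b ^ 2 * x = 1 ∧
    t + p ^ 2 * q * s * b * y = 1 ∧
    i + p ^ 2 * s ^ 2 * a * b * x ^ 2 * y ^ 2 = 1 ∧
    a + p ^ 2 * q * s ^ 2 * i * a ^ 2 * b ^ 2 * x * y = 1 ∧
    b + p * s ^ 2 * t * i * a ^ 2 * b ^ 2 * x ^ 2 * y = 1 ∧
    x + p ^ 2 * q ^ 2 * s * i ^ 2 * a * b ^ 2 = 1 ∧
    y + q * t * i ^ 2 * a * b = 1) ↔
    Core p q s t i a b x y (t * i * a * x) (p * q * i * b) := by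
  constructor
  · rintro ⟨U1, U2, U3, U4, U5, U6, U7, U8, U9⟩
    exact core_of_U U1 U2 U3 U4 U5 U6 U7 U8 U9
  · intro h
    refine ⟨?_, h.c3, ?_, h.relS2, ?_, ?_, ?_, ?_, h.c4⟩
    · linear_combination h.c2
    · linear_combination h.relS1
    · linear_combination h.relI1
    · linear_combination h.relU12
    · linear_combination h.relU112
    · linear_combination h.c6

end

/-- For the algebra `Λ` given by the quiver `1 ⟶ 2` with a loop `x` at vertex 1 and
relation `x² = 0`, the ideal generated by the seven F̂-equation relations equals the
ideal generated by the nine u-equation relations, i.e. `M̃_Λ = Ũ_Λ`. -/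
theorem a2loop_Fhat_ideal_eq_u_ideal :
    Ideal.span
      {uP1 ^ 2 * uS1 * u112 + uP1 * uS1 * uS2 * uI1 * u12 * u112 * uQ1
         + uS1 * uS2 ^ 2 * uI1 ^ 2 * u12 ^ 2 * u112 * uQ1 ^ 2 - 1,
       uP1 ^ 2 * uP2 * uS1 * u112 + uS1 * uS2 * u12 * uQ1 ^ 2 * uQ2
         + uP1 * uP2 * uS1 * uS2 * uI1 * u12 * u112 * uQ1
         + uP2 * uS1 * uS2 ^ 2 * uI1 ^ 2 * u12 ^ 2 * u112 * uQ1 ^ 2 - 1,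
       uP1 * uS1 * u112 + uS1 * uS2 * uI1 * u12 * u112 * uQ1 - 1,
       uQ2 + uP2 * uS2 * uI1 ^ 2 * u12 * u112 - 1,
       uS1 * u12 * uQ1 ^ 2 * uQ2 ^ 2 + uP1 * uP2 * uS1 * uI1 * u12 * u112 * uQ1 * uQ2
         + uP1 ^ 2 * uP2 ^ 2 * uS1 * uI1 ^ 2 * u12 * u112 ^ 2
         + 2 * uP2 * uS1 * uS2 * uI1 ^ 2 * u12 ^ 2 * u112 * uQ1 ^ 2 * uQ2
         + uP1 * uP2 ^ 2 * uS1 * uS2 * uI1 ^ 3 * u12 ^ 2 * u112 ^ 2 * uQ1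
         + uP2 ^ 2 * uS1 * uS2 ^ 2 * uI1 ^ 4 * u12 ^ 3 * u112 ^ 2 * uQ1 ^ 2 - 1,
       uS1 * u12 * uQ1 * uQ2 + uP1 * uP2 * uS1 * uI1 * u12 * u112
         + uP2 * uS1 * uS2 * uI1 ^ 2 * u12 ^ 2 * u112 * uQ1 - 1,
       uP1 * uS1 * u12 * u112 * uQ1 * uQ2 + uP1 ^ 2 * uP2 * uS1 * uI1 * u12 * u112 ^ 2
         + uS1 * uS2 * uI1 * u12 ^ 2 * u112 * uQ1 ^ 2 * uQ2
         + uP1 * uP2 * uS1 * uS2 * uI1 ^ 2 * u12 ^ 2 * u112 ^ 2 * uQ1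
         + uP2 * uS1 * uS2 ^ 2 * uI1 ^ 3 * u12 ^ 3 * u112 ^ 2 * uQ1 ^ 2 - 1} =
    Ideal.span
      {uP1 + uS1 * uS2 ^ 2 * uI1 ^ 2 * u12 ^ 2 * u112 * uQ1 ^ 2 - 1,
       uP2 + uS1 * uS2 * u12 * uQ1 ^ 2 * uQ2 - 1,
       uS1 + uP1 * uP2 * uS1 ^ 2 * uS2 * uI1 ^ 2 * u12 ^ 2 * u112 ^ 2 * uQ1 - 1,
       uS2 + uP1 ^ 2 * uP2 * uS1 * u112 * uQ2 - 1,
       uI1 + uP1 ^ 2 * uS1 ^ 2 * u12 * u112 * uQ1 ^ 2 * uQ2 ^ 2 - 1,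
       u12 + uP1 ^ 2 * uP2 * uS1 ^ 2 * uI1 * u12 ^ 2 * u112 ^ 2 * uQ1 * uQ2 - 1,
       u112 + uP1 * uS1 ^ 2 * uS2 * uI1 * u12 ^ 2 * u112 ^ 2 * uQ1 ^ 2 * uQ2 - 1,
       uQ1 + uP1 ^ 2 * uP2 ^ 2 * uS1 * uI1 ^ 2 * u12 * u112 ^ 2 - 1,
       uQ2 + uP2 * uS2 * uI1 ^ 2 * u12 * u112 - 1} := by
  refine eq_of_forall_ge_iff fun I => ?_
  -- Containment in `I` means that the classes of the variables modulo `I` satisfy the equations.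
  simp only [Ideal.span_le, Set.insert_subset_iff, Set.singleton_subset_iff, SetLike.mem_coe,
    ← Ideal.Quotient.eq_zero_iff_mem, map_sub, map_add, map_mul, map_pow, map_one, map_ofNat,
    sub_eq_zero]
  exact F_iff_core.trans U_iff_core.symm

end A2LoopExample
end

section
/- In the polynomial ring over ℂ in nine variables uP1, uP2, uP3, uS2, uI2, uS3, uQ1, uQ2, uQ3, the ideal generated by the six polynomials uP1 + uS2·uI2·uQ1 − 1; uP1·uP2 + uP2·uS2·uI2·uQ1 + uI2·uS3·uQ1·uQ2 − 1; uP1·uP2·uP3 + uP2·uP3·uS2·uI2·uQ1 + uP3·uI2·uS3·uQ1·uQ2 + uQ1·uQ2·uQ3 − 1; uP2·uS2 + uS3·uQ2 − 1; uP2·uP3·uS2·uI2 + uP3·uI2·uS3·uQ2 + uQ2·uQ3 − 1; uP3·uI2·uS3 + uQ3 − 1 is equal to the ideal generated by the nine polynomials uP1 + uS2·uI2·uQ1 − 1; uP2 + uI2·uS3·uQ1·uQ2 − 1; uP3 + uQ1·uQ2·uQ3 − 1; uS2 + uP1·uS3·uQ2 − 1; uI2 + uP1·uP2·uQ2·uQ3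 − 1; uS3 + uP2·uS2·uQ3 − 1; uQ1 + uP1·uP2·uP3 − 1; uQ2 + uP2·uP3·uS2·uI2 − 1; uQ3 + uP3·uI2·uS3 − 1. -/
/-!
Both inclusions are checked in the quotient by the ideal on the right, so it suffices to show that,
for nine elements of any commutative ring, the two systems of equations imply each other.

The polynomials `F̂_M` are nested: the second is `uP2 * F̂₁ + uI2 * uS3 * uQ1 * uQ2`, the third is
`uP3 * F̂₂ + uQ1 * uQ2 * uQ3`, and the fifth is `uP3 * uI2 * F̂₄ + uQ2 * uQ3`. Setting the inner ones
to `1` turns the second and third F̂-equations into the u-equations of `P₂` and `P₃`; the remaining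
u-equations follow by eliminating monomials one at a time (`u_of_Fhat`). The converse
(`Fhat_of_u`) reverses the steps.
-/

open MvPolynomial

namespace A3Example

/- The nine variables `u_X` for the path algebra of the A₃ quiver `1 → 2 → 3`. -/
noncomputable def uP1 : MvPolynomial (Fin 9) ℂ := X 0
noncomputable def uP2 : MvPolynomial (Fin 9) ℂ := X 1
noncomputable def uP3 : MvPolynomial (Fin 9) ℂ := X 2
noncomputable def uS2 : MvPolynomial (Fin 9) ℂ := X 3
noncomputable def uI2 : MvPolynomial (Fin 9) ℂ := X 4
noncomputable def uS3 : MvPolynomial (Fin 9) ℂ := X 5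
noncomputable def uQ1 : MvPolynomial (Fin 9) ℂ := X 6
noncomputable def uQ2 : MvPolynomial (Fin 9) ℂ := X 7
noncomputable def uQ3 : MvPolynomial (Fin 9) ℂ := X 8

/-- The F̂-equations imply the u-equations in any commutative ring. The letters
`a b c s i t x y z` stand for `P₁, P₂, P₃, S₂, I₂, S₃, ΣP₁, ΣP₂, ΣP₃`. -/
theorem u_of_Fhat {R : Type*} [CommRing R] {a b c s i t x y z : R}
    (h1 : a + s * i * x = 1)
    (h2 : a * b + b * s * i * x + i * t * x * y = 1)
    (h3 : a * b * c + b * c * s * i * x + c * i * t * x * y + x * y * z = 1)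
    (h4 : b * s + t * y = 1)
    (h5 : b * c * s * i + c * i * t * y + y * z = 1)
    (h6 : c * i * t + z = 1) :
    b + i * t * x * y = 1 ∧ c + x * y * z = 1 ∧ s + a * t * y = 1 ∧ i + a * b * y * z = 1 ∧
      t + b * s * z = 1 ∧ x + a * b * c = 1 ∧ y + b * c * s * i = 1 := by
  have hb : b + i * t * x * y = 1 := by linear_combination h2 - b * h1
  have hc : c + x * y * z = 1 := by linear_combination h3 - c * h2
  have hci : c * i + y * z = 1 := by linear_combination h5 - c * i * h4
  have hy : y + b * c * s * i = 1 := by linear_combination h5 - y * h6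
  have hbc : b * c + x * y = 1 := by linear_combination c * hb + hc - x * y * h6
  have hbyz : b * y * z = y - i * t * y := by
    linear_combination y * z * hb - i * t * y * hc + y * h6
  refine ⟨hb, hc, ?_, ?_, ?_, ?_, hy⟩
  · linear_combination h4 + t * y * h1 - s * hb
  · linear_combination b * y * z * h1 + hbyz - b * s * i * hc + hy - i * h4
  · linear_combination z * h4 - t * hci + h6
  · linear_combination b * c * h1 + hbc - x * hy

/-- The u-equations of `P₁, P₂, P₃, S₂, ΣP₂, ΣP₃` imply the F̂-equations in any commutative ring,
with letters as in `u_of_Fhat`. -/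
theorem Fhat_of_u {R : Type*} [CommRing R] {a b c s i t x y z : R}
    (h1 : a + s * i * x = 1)
    (hb : b + i * t * x * y = 1)
    (hc : c + x * y * z = 1)
    (hs : s + a * t * y = 1)
    (hy : y + b * c * s * i = 1)
    (hz : z + c * i * t = 1) :
    a * b + b * s * i * x + i * t * x * y = 1 ∧
      a * b * c + b * c * s * i * x + c * i * t * x * y + x * y * z = 1 ∧
      b * s + t * y = 1 ∧ b * c * s * i + c * i * t * y + y * z = 1 := by
  have h2 : a * b + b * s * i * x + i * t * x * y = 1 := by linear_combination hb + b * h1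
  refine ⟨h2, ?_, ?_, ?_⟩
  · linear_combination hc + c * h2
  · linear_combination hs - t * y * h1 + s * hb
  · linear_combination hy + y * hz

/-- A containment of ideals can be tested in the quotient by the larger one. -/
theorem span_le_span_of_quotient {R : Type*} [CommRing R] {S T : Set R}
    (h : ∀ π : R →+* R ⧸ Ideal.span T, (∀ g ∈ T, π g = 0) → ∀ f ∈ S, π f = 0) :
    Ideal.span S ≤ Ideal.span T :=
  Ideal.span_le.mpr fun f hf =>
    Ideal.Quotient.eq_zero_iff_mem.mp <|
      h (Ideal.Quotient.mk _)
        (fun _ hg => Ideal.Quotient.eq_zero_iff_mem.mpr (Ideal.subset_span hg)) f hf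

/-- For the path algebra of the A₃ quiver `1 → 2 → 3`, the ideal generated by the six
F̂-equation relations equals the ideal generated by the nine u-equation relations,
i.e. `M̃_Λ = Ũ_Λ`. -/
theorem a3_Fhat_ideal_eq_u_ideal :
    Ideal.span
      {uP1 + uS2 * uI2 * uQ1 - 1,
       uP1 * uP2 + uP2 * uS2 * uI2 * uQ1 + uI2 * uS3 * uQ1 * uQ2 - 1,
       uP1 * uP2 * uP3 + uP2 * uP3 * uS2 * uI2 * uQ1 + uP3 * uI2 * uS3 * uQ1 * uQ2
         + uQ1 * uQ2 * uQ3 - 1,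
       uP2 * uS2 + uS3 * uQ2 - 1,
       uP2 * uP3 * uS2 * uI2 + uP3 * uI2 * uS3 * uQ2 + uQ2 * uQ3 - 1,
       uP3 * uI2 * uS3 + uQ3 - 1} =
    Ideal.span
      {uP1 + uS2 * uI2 * uQ1 - 1,
       uP2 + uI2 * uS3 * uQ1 * uQ2 - 1,
       uP3 + uQ1 * uQ2 * uQ3 - 1,
       uS2 + uP1 * uS3 * uQ2 - 1,
       uI2 + uP1 * uP2 * uQ2 * uQ3 - 1,
       uS3 + uP2 * uS2 * uQ3 - 1,
       uQ1 + uP1 * uP2 * uP3 - 1,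
       uQ2 + uP2 * uP3 * uS2 * uI2 - 1,
       uQ3 + uP3 * uI2 * uS3 - 1} := by
  apply le_antisymm <;> refine span_le_span_of_quotient fun π h => ?_
  · simp only [Set.mem_insert_iff, Set.mem_singleton_iff, forall_eq_or_imp, forall_eq, map_sub,
      map_add, map_mul, map_one, sub_eq_zero] at h ⊢
    obtain ⟨h1, hb, hc, hs, -, -, -, hy, hz⟩ := h
    obtain ⟨h2, h3, h4, h5⟩ := Fhat_of_u h1 hb hc hs
      (by linear_combination hy) hz
    exact ⟨h1, by linear_combination h2, by linear_combination h3, h4,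
      by linear_combination h5, by linear_combination hz⟩
  · simp only [Set.mem_insert_iff, Set.mem_singleton_iff, forall_eq_or_imp, forall_eq, map_sub,
      map_add, map_mul, map_one, sub_eq_zero] at h ⊢
    obtain ⟨h1, h2, h3, h4, h5, h6⟩ := h
    obtain ⟨hb, hc, hs, hi, ht, hx, hy⟩ := u_of_Fhat h1 h2 h3 h4 h5 h6
    exact ⟨h1, hb, hc, hs, hi, ht, hx, hy, by linear_combination h6⟩

end A3Example
end

section
/- In the polynomial ring over ℂ in eight variables uP1, uP2, uP3, uS2, uS3, uQ1, uQ2, uQ3, the ideal generated by the five polynomials uP1 + uS2·uQ1 − 1; uP1·uP2 + uP2·uS2·uQ1 + uS3·uQ1·uQ2 − 1; uP2·uP3·uS2 + uP3·uS3·uQ2 + uQ2·uQ3 − 1; uP2·uS2 + uS3·uQ2 − 1; uP3·uS3 + uQ3 − 1 is equal to the ideal generated by the eight polynomials uP1 + uS2·uQ1 − 1; uP2 + uS3·uQ1·uQ2 − 1; uP3 + uQ2·uQ3 − 1; uS2 + uP1·uS3·uQ2 − 1; uS3 + uP2·uS2·uQ3 − 1; uQ1 + uP1·uP2 − 1; uQ2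 + uP2·uP3·uS2 − 1; uQ3 + uP3·uS3 − 1. -/
/-!
Both inclusions are checked modulo the larger ideal, so it suffices that in every commutative
ring the five F̂-equations and the eight u-equations have the same solutions
(`uEquations_of_FhatEquations`, `FhatEquations_of_uEquations`). Each equation of one system is an
explicit linear combination of those of the other. The case least
visible from the shape of the equations is `uP2 * uS2 + uS3 * uQ2 = 1`: multiplying
`uP2 + uS3 * uQ1 * uQ2 = 1` by `uS2` and replacing `uS2 * uQ1` by `1 - uP1` gives
`uP2 * uS2 + uS3 * uQ2 = uS2 + uP1 * uS3 * uQ2`, and the right side is `1` by another u-equation.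
-/

open MvPolynomial

namespace A3RelationExample

/- The eight variables `u_X` for the path algebra of the quiver `1 → 2 → 3`
modulo the relation that the composite of the two arrows vanishes. -/
noncomputable def uP1 : MvPolynomial (Fin 8) ℂ := X 0
noncomputable def uP2 : MvPolynomial (Fin 8) ℂ := X 1
noncomputable def uP3 : MvPolynomial (Fin 8) ℂ := X 2
noncomputable def uS2 : MvPolynomial (Fin 8) ℂ := X 3
noncomputable def uS3 : MvPolynomial (Fin 8) ℂ := X 4
noncomputable def uQ1 : MvPolynomial (Fin 8) ℂ := X 5
noncomputable def uQ2 : MvPolynomial (Fin 8) ℂ := X 6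
noncomputable def uQ3 : MvPolynomial (Fin 8) ℂ := X 7

/-- With `(p₁, p₂, p₃, s₂, s₃, q₁, q₂, q₃)` in place of `(uP1, uP2, uP3, uS2, uS3, uQ1, uQ2, uQ3)`,
a solution of the F̂-equations in a commutative ring solves the u-equations. -/
theorem uEquations_of_FhatEquations {A : Type*} [CommRing A] {p₁ p₂ p₃ s₂ s₃ q₁ q₂ q₃ : A}
    (f₁ : p₁ + s₂ * q₁ - 1 = 0)
    (f₂ : p₁ * p₂ + p₂ * s₂ * q₁ + s₃ * q₁ * q₂ - 1 = 0)
    (f₃ : p₂ * p₃ * s₂ + p₃ * s₃ * q₂ + q₂ * q₃ - 1 = 0)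
    (f₄ : p₂ * s₂ + s₃ * q₂ - 1 = 0)
    (f₅ : p₃ * s₃ + q₃ - 1 = 0) :
    p₁ + s₂ * q₁ - 1 = 0 ∧ p₂ + s₃ * q₁ * q₂ - 1 = 0 ∧ p₃ + q₂ * q₃ - 1 = 0 ∧
      s₂ + p₁ * s₃ * q₂ - 1 = 0 ∧ s₃ + p₂ * s₂ * q₃ - 1 = 0 ∧ q₁ + p₁ * p₂ - 1 = 0 ∧
      q₂ + p₂ * p₃ * s₂ - 1 = 0 ∧ q₃ + p₃ * s₃ - 1 = 0 := by
  have u₃ : p₃ + q₂ * q₃ - 1 = 0 := by linear_combination f₃ - p₃ * f₄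
  have u₆ : q₁ + p₁ * p₂ - 1 = 0 := by linear_combination f₂ - q₁ * f₄
  refine ⟨f₁, ?_, u₃, ?_, ?_, u₆, ?_, ?_⟩
  · linear_combination f₂ - p₂ * f₁
  · linear_combination p₁ * f₄ + f₁ - s₂ * u₆
  · linear_combination q₃ * f₄ + f₅ - s₃ * u₃
  · linear_combination f₃ - q₂ * f₅
  · linear_combination f₅

/-- With `(p₁, p₂, p₃, s₂, s₃, q₁, q₂, q₃)` in place of `(uP1, uP2, uP3, uS2, uS3, uQ1, uQ2, uQ3)`,
a solution of the u-equations in a commutative ring solves the F̂-equations.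
Five of the eight u-equations suffice. -/
theorem FhatEquations_of_uEquations {A : Type*} [CommRing A] {p₁ p₂ p₃ s₂ s₃ q₁ q₂ q₃ : A}
    (u₁ : p₁ + s₂ * q₁ - 1 = 0)
    (u₂ : p₂ + s₃ * q₁ * q₂ - 1 = 0)
    (u₄ : s₂ + p₁ * s₃ * q₂ - 1 = 0)
    (u₇ : q₂ + p₂ * p₃ * s₂ - 1 = 0)
    (u₈ : q₃ + p₃ * s₃ - 1 = 0) :
    p₁ + s₂ * q₁ - 1 = 0 ∧ p₁ * p₂ + p₂ * s₂ * q₁ + s₃ * q₁ * q₂ - 1 = 0 ∧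
      p₂ * p₃ * s₂ + p₃ * s₃ * q₂ + q₂ * q₃ - 1 = 0 ∧ p₂ * s₂ + s₃ * q₂ - 1 = 0 ∧
      p₃ * s₃ + q₃ - 1 = 0 := by
  refine ⟨u₁, ?_, ?_, ?_, ?_⟩
  · linear_combination u₂ + p₂ * u₁
  · linear_combination u₇ + q₂ * u₈
  · linear_combination u₄ + s₂ * u₂ - s₃ * q₂ * u₁
  · linear_combination u₈

/-- An inclusion of spans may be tested modulo the larger ideal. -/
theorem span_le_of_quotient {R : Type*} [CommRing R] {S T : Set R}
    (h : ∀ I : Ideal R, (∀ t ∈ T, Ideal.Quotient.mk I t = 0) →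
      ∀ s ∈ S, Ideal.Quotient.mk I s = 0) : Ideal.span S ≤ Ideal.span T :=
  Ideal.span_le.mpr fun s hs => Ideal.Quotient.eq_zero_iff_mem.mp <|
    h _ (fun _ ht => Ideal.Quotient.eq_zero_iff_mem.mpr (Ideal.subset_span ht)) s hs

/-- For the algebra given by the quiver `1 → 2 → 3` with the composite of the two
arrows equal to zero, the ideal generated by the five F̂-equation relations equals the
ideal generated by the eight u-equation relations, i.e. `M̃_Λ = Ũ_Λ`. -/
theorem a3relation_Fhat_ideal_eq_u_ideal :
    Ideal.span
      {uP1 + uS2 * uQ1 - 1,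
       uP1 * uP2 + uP2 * uS2 * uQ1 + uS3 * uQ1 * uQ2 - 1,
       uP2 * uP3 * uS2 + uP3 * uS3 * uQ2 + uQ2 * uQ3 - 1,
       uP2 * uS2 + uS3 * uQ2 - 1,
       uP3 * uS3 + uQ3 - 1} =
    Ideal.span
      {uP1 + uS2 * uQ1 - 1,
       uP2 + uS3 * uQ1 * uQ2 - 1,
       uP3 + uQ2 * uQ3 - 1,
       uS2 + uP1 * uS3 * uQ2 - 1,
       uS3 + uP2 * uS2 * uQ3 - 1,
       uQ1 + uP1 * uP2 - 1,
       uQ2 + uP2 * uP3 * uS2 - 1,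
       uQ3 + uP3 * uS3 - 1} := by
  apply le_antisymm <;> refine span_le_of_quotient fun I => ?_ <;>
    simp only [Set.mem_insert_iff, Set.mem_singleton_iff, forall_eq_or_imp, forall_eq,
      map_add, map_sub, map_mul, map_one]
  · rintro ⟨u₁, u₂, -, u₄, -, -, u₇, u₈⟩
    exact FhatEquations_of_uEquations u₁ u₂ u₄ u₇ u₈
  · rintro ⟨f₁, f₂, f₃, f₄, f₅⟩
    exact uEquations_of_FhatEquations f₁ f₂ f₃ f₄ f₅

end A3RelationExample
end

section
/- Let K = ℂ(y₁, y₂) be the field of fractions of the polynomial ring ℂ[y₁, y₂], and let φ : ℂ[u₁,u₂,u₃,u₄,u₅] → K be the ℂ-algebra homomorphism determined by u₁ ↦ 1/(1+y₁), u₂ ↦ (1+y₁)/(1+y₁+y₁y₂), u₃ ↦ (1+y₁+y₁y₂)/((1+y₁)(1+y₂)), u₄ ↦ (y₁+y₁y₂)/(1+y₁+y₁y₂), u₅ ↦ y₂/(1+y₂). Then the kernel of φ is exactly the ideal generated by the three polynomials u₁ + u₃u₄ − 1, u₁u₂ + u₂u₃u₄ + u₄u₅ − 1, u₂u₃ + u₅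 − 1; in particular this ideal is prime. -/
/-!
On the zero set of the relations, `u₁ = 1 - u₃u₄` and `u₅ = 1 - u₂u₃`, and the remaining relation
becomes `f = a + c - 1 - abc = 0` in `(a, b, c) = (u₂, u₃, u₄)`; thus `I` corresponds to the
principal ideal `(f)` of `ℂ[a, b, c]` (`sub_incl_elim_mem`, `incl_f_mem`).

Let `q(a, b, c)` vanish under the parametrization. Since `ac · b ≡ a + c - 1` modulo `f`, some
`(ac)ⁿ q` is congruent to a polynomial `g(a, c)` (`exists_clear`). The images of `a` and `c` are
algebraically independent because `y₁, y₂` are rational functions of them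
(`algebraicIndependent_v`), so `g = 0` and `f ∣ (ac)ⁿ q`. As `f` is not divisible by the primes
`a` and `c`, it follows that `f ∣ q` (`f_dvd_of_dvd_mul`). Primality of `I` is then clear, the
target `K` being a field.
-/

open MvPolynomial

namespace A2Kernel

/-- The field `ℂ(y₁, y₂)` of rational functions in two variables. -/
abbrev K : Type := FractionRing (MvPolynomial (Fin 2) ℂ)

/-- The rational function `yᵢ` in `ℂ(y₁, y₂)` (with `y 0 = y₁`, `y 1 = y₂`). -/
noncomputable def y (i : Fin 2) : K := algebraMap (MvPolynomial (Fin 2) ℂ) K (X i)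

/-- The canonical rational parametrization `v_X` for the path algebra of the A₂
quiver `1 → 2`: the images of `u_{P₁}, u_{P₂}, u_{S₂}, u_{ΣP₁}, u_{ΣP₂}`. -/
noncomputable def v : Fin 5 → K :=
  ![1 / (1 + y 0),
    (1 + y 0) / (1 + y 0 + y 0 * y 1),
    (1 + y 0 + y 0 * y 1) / ((1 + y 0) * (1 + y 1)),
    (y 0 + y 0 * y 1) / (1 + y 0 + y 0 * y 1),
    y 1 / (1 + y 1)]

/-- The ideal generated by the F̂-equation relations of the path algebra of A₂. -/
noncomputable def I : Ideal (MvPolynomial (Fin 5) ℂ) :=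
  Ideal.span
    {X 0 + X 2 * X 3 - 1,
     X 0 * X 1 + X 1 * X 2 * X 3 + X 3 * X 4 - 1,
     X 1 * X 2 + X 4 - 1}

/-- The hypersurface equation `a + c - 1 - abc` in `ℂ[a, b, c]`, with `a, b, c = X 0, X 1, X 2`
standing for `u₂, u₃, u₄`. -/
noncomputable def f : MvPolynomial (Fin 3) ℂ := X 0 + X 2 - 1 - X 0 * X 1 * X 2

/-- Elimination of `u₁ = 1 - u₃u₄` and `u₅ = 1 - u₂u₃`. -/
noncomputable def elim : MvPolynomial (Fin 5) ℂ →ₐ[ℂ] MvPolynomial (Fin 3) ℂ :=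
  aeval ![1 - X 1 * X 2, X 0, X 1, X 2, 1 - X 0 * X 1]

/-- The inclusion `ℂ[u₂, u₃, u₄] → ℂ[u₁, …, u₅]`. -/
noncomputable def incl : MvPolynomial (Fin 3) ℂ →ₐ[ℂ] MvPolynomial (Fin 5) ℂ :=
  aeval ![X 1, X 2, X 3]

lemma den_ne_zero (p : MvPolynomial (Fin 2) ℂ) (hp : eval 0 p ≠ 0) :
    algebraMap (MvPolynomial (Fin 2) ℂ) K p ≠ 0 := by
  intro h
  have : p = 0 := IsFractionRing.injective (MvPolynomial (Fin 2) ℂ) K (by simpa using h)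
  simp [this] at hp

lemma one_add_y0_ne : 1 + y 0 ≠ 0 := by
  have h := den_ne_zero (1 + X 0) (by simp)
  rwa [map_add, map_one] at h

lemma one_add_y1_ne : 1 + y 1 ≠ 0 := by
  have h := den_ne_zero (1 + X 1) (by simp)
  rwa [map_add, map_one] at h

lemma D_ne : 1 + y 0 + y 0 * y 1 ≠ 0 := by
  have h := den_ne_zero (1 + X 0 + X 0 * X 1) (by simp)
  rwa [map_add, map_add, map_mul, map_one] at h

lemma y0_ne : y 0 ≠ 0 := by
  intro h
  simp [y] at h

lemma I_le_ker : I ≤ RingHom.ker (aeval v : MvPolynomial (Fin 5) ℂ →ₐ[ℂ] K) := by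
  have h0 := one_add_y0_ne
  have h1 := one_add_y1_ne
  have hD := D_ne
  rw [I, Ideal.span_le]
  rintro p (rfl | rfl | rfl) <;>
    simp only [SetLike.mem_coe, RingHom.mem_ker, map_add, map_sub, map_mul, map_one, aeval_X, v,
      Matrix.cons_val] <;> field_simp <;> ring

lemma algebraicIndependent_y : AlgebraicIndependent ℂ y := by
  rw [algebraicIndependent_iff_injective_aeval]
  have : (aeval y : MvPolynomial (Fin 2) ℂ →ₐ[ℂ] K) =
      IsScalarTower.toAlgHom ℂ (MvPolynomial (Fin 2) ℂ) K := by
    ext i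
    simp [y]
  rw [this]
  exact IsFractionRing.injective (MvPolynomial (Fin 2) ℂ) K

/-- The coordinates `a = v₂`, `c = v₄` are algebraically independent: `y₁ = (a + c - 1) / (1 - c)`
and `y₂ = (1 - a) / (a + c - 1)`, so `K` is algebraic over `ℂ[a, c]`, while its transcendence
degree is `2`. -/
lemma algebraicIndependent_v : AlgebraicIndependent ℂ ![v 1, v 3] := by
  have h0 := one_add_y0_ne
  have h1 := one_add_y1_ne
  have hD := D_ne
  have hy := y0_ne
  set A := Algebra.adjoin ℂ (Set.range ![v 1, v 3])
  have ha : IsAlgebraic A (v 1) :=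
    isAlgebraic_algebraMap (⟨v 1, Algebra.subset_adjoin ⟨0, rfl⟩⟩ : A)
  have hc : IsAlgebraic A (v 3) :=
    isAlgebraic_algebraMap (⟨v 3, Algebra.subset_adjoin ⟨1, rfl⟩⟩ : A)
  have hone : IsAlgebraic A (1 : K) := isAlgebraic_one
  have hcne : 1 - v 3 ≠ 0 := by
    have : 1 - v 3 = 1 / (1 + y 0 + y 0 * y 1) := by
      simp only [v, Matrix.cons_val]
      field_simp
      ring
    rw [this]
    exact one_div_ne_zero hD
  have hac : v 1 + v 3 - 1 = y 0 / (1 + y 0 + y 0 * y 1) := by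
    simp only [v, Matrix.cons_val]
    field_simp
    ring
  have hacne : v 1 + v 3 - 1 ≠ 0 := by
    rw [hac]
    exact div_ne_zero hy hD
  have e0 : y 0 = (v 1 + v 3 - 1) * (1 - v 3)⁻¹ := by
    rw [eq_mul_inv_iff_mul_eq₀ hcne]
    simp only [v, Matrix.cons_val]
    field_simp
    ring
  have e1 : y 1 = (1 - v 1) * (v 1 + v 3 - 1)⁻¹ := by
    rw [eq_mul_inv_iff_mul_eq₀ hacne, hac]
    simp only [v, Matrix.cons_val]
    rw [eq_sub_iff_add_eq, mul_div_assoc', ← add_div, div_eq_one_iff_eq hD]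
    ring
  have hyalg : ∀ i, IsAlgebraic A (y i) := by
    intro i
    fin_cases i
    · change IsAlgebraic A (y 0)
      rw [e0]
      exact ((ha.add hc).sub hone).mul (hone.sub hc).inv
    · change IsAlgebraic A (y 1)
      rw [e1]
      exact (hone.sub ha).mul ((ha.add hc).sub hone).inv
  have hpoly : ∀ p : MvPolynomial (Fin 2) ℂ,
      IsAlgebraic A (algebraMap (MvPolynomial (Fin 2) ℂ) K p) := by
    intro p
    induction p using MvPolynomial.induction_on with
    | C r =>
      have : algebraMap (MvPolynomial (Fin 2) ℂ) K (C r) = algebraMap A K (algebraMap ℂ A r) := by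
        rw [← IsScalarTower.algebraMap_apply ℂ A K, ← algebraMap_eq,
          ← IsScalarTower.algebraMap_apply ℂ (MvPolynomial (Fin 2) ℂ) K]
      rw [this]
      exact isAlgebraic_algebraMap _
    | add p q hp hq => rw [map_add]; exact hp.add hq
    | mul_X p i hp => rw [map_mul]; exact hp.mul (hyalg i)
  have : Algebra.IsAlgebraic A K := ⟨fun z => by
    obtain ⟨p, q, -, rfl⟩ := IsFractionRing.div_surjective (A := MvPolynomial (Fin 2) ℂ) z
    rw [div_eq_mul_inv]
    exact (hpoly p).mul (hpoly q).inv⟩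
  exact (Algebra.IsAlgebraic.isTranscendenceBasis_of_le_trdeg_of_finite ℂ ![v 1, v 3]
    algebraicIndependent_y.cardinalMk_le_trdeg).1

/-- Modulo `f` one has `ac · b = a + c - 1`, so multiplying by a power of `ac` removes `b`. -/
lemma exists_clear (q : MvPolynomial (Fin 3) ℂ) : ∃ (n : ℕ) (g : MvPolynomial (Fin 2) ℂ),
    f ∣ (X 0 * X 2) ^ n * q - aeval ![X 0, X 2] g := by
  induction q using MvPolynomial.induction_on with
  | C r => exact ⟨0, C r, by simp [algebraMap_eq]⟩
  | add p q hp hq =>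
    obtain ⟨n, g, s, hs⟩ := hp
    obtain ⟨m, h, t, ht⟩ := hq
    refine ⟨n + m, (X 0 * X 1) ^ m * g + (X 0 * X 1) ^ n * h,
      (X 0 * X 2) ^ m * s + (X 0 * X 2) ^ n * t, ?_⟩
    simp only [map_add, map_mul, map_pow, aeval_X, Matrix.cons_val]
    linear_combination (X 0 * X 2) ^ m * hs + (X 0 * X 2) ^ n * ht
  | mul_X p i hp =>
    obtain ⟨n, g, s, hs⟩ := hp
    fin_cases i
    · refine ⟨n, g * X 0, s * X 0, ?_⟩
      simp only [map_mul, aeval_X, Matrix.cons_val, Fin.zero_eta]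
      linear_combination X 0 * hs
    · refine ⟨n + 1, g * (X 0 + X 1 - 1),
        s * (X 0 * X 1 * X 2) - aeval ![X 0, X 2] g, ?_⟩
      simp only [map_mul, map_add, map_sub, map_one, aeval_X, Matrix.cons_val, Fin.mk_one]
      rw [f] at hs ⊢
      linear_combination (X 0 * X 1 * X 2) * hs
    · refine ⟨n, g * X 1, s * X 2, ?_⟩
      simp only [map_mul, aeval_X, Matrix.cons_val, Fin.reduceFinMk]
      linear_combination X 2 * hs

lemma isRelPrime_f_X (i : Fin 3) :
    IsRelPrime f (X i : MvPolynomial (Fin 3) ℂ) := by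
  refine ((Irreducible.isRelPrime_iff_not_dvd (X_prime (R := ℂ)).irreducible).2 ?_).symm
  rintro ⟨k, hk⟩
  -- at the origin `f` takes the value `-1`
  have := congrArg (eval 0) hk
  simp [f] at this

lemma f_dvd_of_dvd_mul {n : ℕ} {q : MvPolynomial (Fin 3) ℂ} (h : f ∣ (X 0 * X 2) ^ n * q) :
    f ∣ q :=
  (((isRelPrime_f_X 0).mul_right (isRelPrime_f_X 2)).pow_right
    ).dvd_of_dvd_mul_left h

lemma sub_incl_elim_mem (p : MvPolynomial (Fin 5) ℂ) : p - incl (elim p) ∈ I := by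
  have key : (Ideal.Quotient.mkₐ ℂ I).comp (incl.comp elim) = Ideal.Quotient.mkₐ ℂ I := by
    ext i
    refine (Ideal.Quotient.eq.2 ?_).symm
    have m1 : (X 0 + X 2 * X 3 - 1 : MvPolynomial (Fin 5) ℂ) ∈ I := Ideal.subset_span (by simp)
    have m3 : (X 1 * X 2 + X 4 - 1 : MvPolynomial (Fin 5) ℂ) ∈ I := Ideal.subset_span (by simp)
    fin_cases i <;> simp [elim, incl]
    · convert m1 using 1; ring
    · convert m3 using 1; ring
  exact Ideal.Quotient.eq.1 (DFunLike.congr_fun key p).symm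

lemma incl_f_mem : incl f ∈ I := by
  have m1 : (X 0 + X 2 * X 3 - 1 : MvPolynomial (Fin 5) ℂ) ∈ I := Ideal.subset_span (by simp)
  have m2 : (X 0 * X 1 + X 1 * X 2 * X 3 + X 3 * X 4 - 1 : MvPolynomial (Fin 5) ℂ) ∈ I :=
    Ideal.subset_span (by simp)
  have m3 : (X 1 * X 2 + X 4 - 1 : MvPolynomial (Fin 5) ℂ) ∈ I := Ideal.subset_span (by simp)
  have : incl f = (X 0 * X 1 + X 1 * X 2 * X 3 + X 3 * X 4 - 1)
      - X 1 * (X 0 + X 2 * X 3 - 1) - X 3 * (X 1 * X 2 + X 4 - 1) := by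
    simp only [incl, f, map_sub, map_add, map_mul, map_one, aeval_X, Matrix.cons_val]
    ring
  rw [this]
  exact I.sub_mem (I.sub_mem m2 (I.mul_mem_left _ m1)) (I.mul_mem_left _ m3)

lemma f_dvd_of_aeval_eq_zero (q : MvPolynomial (Fin 3) ℂ) (hq : aeval v (incl q) = 0) :
    f ∣ q := by
  obtain ⟨n, g, s, hs⟩ := exists_clear q
  have hf : aeval v (incl f) = 0 := I_le_ker incl_f_mem
  have hg : aeval ![v 1, v 3] g = 0 := by
    have h := congrArg (fun p => aeval v (incl p)) hs
    simp only [map_sub, map_mul, hq, hf, mul_zero, zero_mul, zero_sub, neg_eq_zero] at h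
    have e : ((aeval v).comp (incl.comp (aeval ![X 0, X 2])) : MvPolynomial (Fin 2) ℂ →ₐ[ℂ] K) =
        aeval ![v 1, v 3] := by
      ext i
      fin_cases i <;> simp [incl]
    rw [← e]
    exact h
  have g0 : g = 0 :=
    (algebraicIndependent_iff_injective_aeval.1 algebraicIndependent_v) (by rw [hg, map_zero])
  rw [g0, map_zero, sub_zero] at hs
  exact f_dvd_of_dvd_mul ⟨s, hs⟩

lemma ker_le_I : RingHom.ker (aeval v : MvPolynomial (Fin 5) ℂ →ₐ[ℂ] K) ≤ I := by
  intro p hp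
  have hsub := sub_incl_elim_mem p
  have hq : aeval v (incl (elim p)) = 0 := by
    have h := I_le_ker hsub
    rw [RingHom.mem_ker, map_sub, (RingHom.mem_ker).1 hp, zero_sub, neg_eq_zero] at h
    exact h
  obtain ⟨s, hs⟩ := f_dvd_of_aeval_eq_zero _ hq
  have : incl (elim p) ∈ I := by
    rw [hs, map_mul]
    exact I.mul_mem_right _ incl_f_mem
  simpa using I.add_mem hsub this

/-- The kernel of the parametrization map `ℂ[u₁,…,u₅] → ℂ(y₁,y₂)`, `uᵢ ↦ vᵢ`,
is exactly the ideal generated by the F̂-equation relations of the path algebra of A₂;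
in particular this ideal is prime. -/
theorem ker_aeval_v_eq_Fhat_ideal :
    RingHom.ker (aeval v : MvPolynomial (Fin 5) ℂ →ₐ[ℂ] K) = I ∧ I.IsPrime := by
  have h : RingHom.ker (aeval v : MvPolynomial (Fin 5) ℂ →ₐ[ℂ] K) = I :=
    le_antisymm ker_le_I I_le_ker
  exact ⟨h, h ▸ RingHom.ker_isPrime _⟩

end A2Kernel
end

section
/- In ℂ[u₁,u₂,u₃,u₄,u₅], let J be the ideal generated by the six polynomials u₁ + u₃u₄ − 1, u₂ + u₄u₅ − 1, u₃ + u₁u₅ − 1, u₄ + u₁u₂ − 1, u₅ + u₂u₃ − 1, and u₁. Then the ℂ-algebra homomorphism ℂ[u₁,u₂,u₃,u₄,u₅] → ℂ[a,b] determined by u₁ ↦ 0, u₂ ↦ a, u₃ ↦ 1, u₄ ↦ 1, u₅ ↦ b induces a ℂ-algebra isomorphism from ℂ[u₁,u₂,u₃,u₄,u₅]/J onto ℂ[a,b]/⟨a + b − 1⟩. -/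
/-!
Modulo `u₁`, the relations `u₃ + u₁u₅ - 1` and `u₄ + u₁u₂ - 1` force `u₃ = u₄ = 1`, after which
the remaining relations all become trivial or equal to `u₂ + u₅ - 1`. Hence `φ : u ↦ (0, a, 1, 1, b)`
maps `J` into `⟨a + b - 1⟩`, the map `ψ : a ↦ u₂, b ↦ u₅` sends `a + b - 1` into `J`, and the
induced maps on quotients are mutually inverse, as is checked on the variables.
-/

open MvPolynomial

namespace A2JassoReduction

/-- The ideal of `ℂ[u₁,…,u₅]` generated by the u-equation relations of the path
algebra of the A₂ quiver `1 → 2`, together with `u₁ = u_{P₁}`. -/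
noncomputable def J : Ideal (MvPolynomial (Fin 5) ℂ) :=
  Ideal.span
    {X 0 + X 2 * X 3 - 1,
     X 1 + X 3 * X 4 - 1,
     X 2 + X 0 * X 4 - 1,
     X 3 + X 0 * X 1 - 1,
     X 4 + X 1 * X 2 - 1,
     X 0}

/-- The ideal of `ℂ[a,b]` generated by the single u-equation relation `a + b − 1`
of the Jasso reduction (of type A₁). -/
noncomputable def J' : Ideal (MvPolynomial (Fin 2) ℂ) :=
  Ideal.span {X 0 + X 1 - 1}

/-- The substitution `u₁ ↦ 0, u₂ ↦ a, u₃ ↦ 1, u₄ ↦ 1, u₅ ↦ b`. -/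
noncomputable def φ : MvPolynomial (Fin 5) ℂ →ₐ[ℂ] MvPolynomial (Fin 2) ℂ :=
  aeval ![0, X 0, 1, 1, X 1]

/-- The substitution `a ↦ u₂, b ↦ u₅`, a right inverse of `φ` and its inverse modulo the ideals. -/
noncomputable def ψ : MvPolynomial (Fin 2) ℂ →ₐ[ℂ] MvPolynomial (Fin 5) ℂ :=
  aeval ![X 1, X 4]

lemma J_le_comap : J ≤ J'.comap φ := by
  have h : (X 0 + X 1 - 1 : MvPolynomial (Fin 2) ℂ) ∈ J' := Ideal.subset_span rfl
  have h' : (X 1 + X 0 - 1 : MvPolynomial (Fin 2) ℂ) ∈ J' := by rwa [add_comm (X 1)]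
  rw [J, Ideal.span_le]
  rintro p (rfl | rfl | rfl | rfl | rfl | rfl) <;> simp [φ, h, h']

lemma X0_mem : (X 0 : MvPolynomial (Fin 5) ℂ) ∈ J := Ideal.subset_span (by simp)

lemma X2_sub_one_mem : (X 2 - 1 : MvPolynomial (Fin 5) ℂ) ∈ J := by
  have h : (X 2 + X 0 * X 4 - 1 : MvPolynomial (Fin 5) ℂ) ∈ J := Ideal.subset_span (by simp)
  convert J.sub_mem h (J.mul_mem_left (X 4) X0_mem) using 1
  ring

lemma X3_sub_one_mem : (X 3 - 1 : MvPolynomial (Fin 5) ℂ) ∈ J := by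
  have h : (X 3 + X 0 * X 1 - 1 : MvPolynomial (Fin 5) ℂ) ∈ J := Ideal.subset_span (by simp)
  convert J.sub_mem h (J.mul_mem_left (X 1) X0_mem) using 1
  ring

lemma J'_le_comap : J' ≤ J.comap ψ := by
  rw [J', Ideal.span_le, Set.singleton_subset_iff]
  have h : (X 1 + X 3 * X 4 - 1 : MvPolynomial (Fin 5) ℂ) ∈ J := Ideal.subset_span (by simp)
  have h' : (X 1 + X 4 - 1 : MvPolynomial (Fin 5) ℂ) ∈ J := by
    convert J.sub_mem h (J.mul_mem_left (X 4) X3_sub_one_mem) using 1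
    ring
  simpa [ψ] using h'

/-- Jasso reduction of the A₂ variety at the divisor `u_{P₁} = 0`: the homomorphism
`ℂ[u₁,…,u₅] → ℂ[a,b]` given by `u₁ ↦ 0, u₂ ↦ a, u₃ ↦ 1, u₄ ↦ 1, u₅ ↦ b` induces a
`ℂ`-algebra isomorphism `ℂ[u₁,…,u₅]/J ≃ ℂ[a,b]/⟨a + b − 1⟩`. -/
theorem quotient_iso_jasso_reduction :
    ∃ e : (MvPolynomial (Fin 5) ℂ ⧸ J) ≃ₐ[ℂ] (MvPolynomial (Fin 2) ℂ ⧸ J'),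
      ∀ p : MvPolynomial (Fin 5) ℂ,
        e (Ideal.Quotient.mk J p) =
          Ideal.Quotient.mk J' (aeval ![0, X 0, 1, 1, X 1] p) := by
  refine ⟨AlgEquiv.ofAlgHom (Ideal.quotientMapₐ J' φ J_le_comap)
    (Ideal.quotientMapₐ J ψ J'_le_comap) ?_ ?_, fun p => rfl⟩
  · apply Ideal.Quotient.algHom_ext
    ext i
    fin_cases i <;> simp [φ, ψ]
  · have h0 := Ideal.Quotient.eq_zero_iff_mem.mpr X0_mem
    have h2 := Ideal.Quotient.eq.mpr X2_sub_one_mem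
    have h3 := Ideal.Quotient.eq.mpr X3_sub_one_mem
    apply Ideal.Quotient.algHom_ext
    ext i
    fin_cases i <;> simp [φ, ψ, h0, h2, h3]

end A2JassoReduction
end

section
/- For all real numbers y₁ > 0 and y₂ > 0: L(y₁/(1+y₁)) + L(y₁y₂/(1+y₁+y₁y₂)) + L(y₂/((1+y₁)(1+y₂))) + L(1/(1+y₁+y₁y₂)) + L(1/(1+y₂)) = π²/3, where L is the Rogers dilogarithm. (Each of the five arguments lies in the open interval (0,1).) -/
/-!
The sum of the five Rogers dilogarithms does not depend on `y₁`: since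
`L'(x) = -(log(1-x)/x + log x/(1-x))/2` (`hasDerivAt_rogersL`), and since the arguments and their
complements to `1` are all monomials in `y₁, y₂, 1+y₁, 1+y₂, 1+y₁+y₁y₂`, the `y₁`-derivative is a
combination of the logarithms of these five quantities in which everything cancels. As `y₁ → 0⁺`
the arguments tend to `0, 0, y₂/(1+y₂), 1, 1/(1+y₂)`. The limits `L(0⁺) = 0` and `L(1⁻) = π²/6`
(`tendsto_rogersL_zero`, `tendsto_rogersL_one`) reduce the claim to Euler's reflection formula
`L(x) + L(1-x) = π²/6` (`rogersL_add_rogersL_one_sub`), which is proved by the same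
derivative-and-limit argument. The limit at `1` comes from the expansion
`-∫₀ˣ log(1-t)/t dt = ∑ xⁿ⁺¹/(n+1)²`, uniformly convergent on `[0,1]`, and from `ζ(2) = π²/6`.
-/

/-- The Rogers dilogarithm, for `0 < x < 1`:
`L(x) = −∫₀ˣ log(1−t)/t dt + (1/2)·log x · log(1−x)`. -/
noncomputable def rogersL (x : ℝ) : ℝ :=
  (-(∫ t in (0:ℝ)..x, Real.log (1 - t) / t)) + (1 / 2) * Real.log x * Real.log (1 - x)

open Filter Topology Set

/-- A function with zero derivative on an open connected set equals any limit it has along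
that set. -/
lemma eq_of_deriv_zero_of_tendsto {f : ℝ → ℝ} {s : Set ℝ} {a c x : ℝ} (hs : IsOpen s)
    (hs' : IsPreconnected s) (hf : ∀ y ∈ s, HasDerivAt f 0 y) [(𝓝[s] a).NeBot]
    (hlim : Tendsto f (𝓝[s] a) (𝓝 c)) (hx : x ∈ s) : f x = c := by
  have hconst : ∀ y ∈ s, f x = f y := fun y hy =>
    hs.is_const_of_deriv_eq_zero hs' (fun z hz => (hf z hz).differentiableAt.differentiableWithinAt)
      (fun z hz => (hf z hz).deriv) hx hy
  refine tendsto_nhds_unique (tendsto_const_nhds.congr' ?_) hlim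
  filter_upwards [self_mem_nhdsWithin] with y hy using hconst y hy

/-- The integrand `log(1-t)/t`, extended continuously to `t = 0`. -/
noncomputable def dilogIntegrand : ℝ → ℝ := dslope (fun t => Real.log (1 - t)) 0

lemma dilogIntegrand_of_ne {t : ℝ} (ht : t ≠ 0) : dilogIntegrand t = Real.log (1 - t) / t := by
  simp [dilogIntegrand, dslope_of_ne _ ht, slope_def_field]

lemma continuousOn_dilogIntegrand : ContinuousOn dilogIntegrand (Iio 1) := by
  refine (continuousOn_dslope (Iio_mem_nhds one_pos)).2 ⟨?_, ?_⟩
  · exact ContinuousOn.log (by fun_prop) fun t ht => (sub_pos.2 ht).ne'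
  · exact DifferentiableAt.log (by fun_prop) (by norm_num)

lemma continuousAt_dilogIntegrand {x : ℝ} (hx : x < 1) : ContinuousAt dilogIntegrand x :=
  continuousOn_dilogIntegrand.continuousAt (Iio_mem_nhds hx)

lemma integral_log_div_eq (x : ℝ) :
    ∫ t in (0:ℝ)..x, Real.log (1 - t) / t = ∫ t in (0:ℝ)..x, dilogIntegrand t := by
  refine intervalIntegral.integral_congr_uIoo fun t ht => (dilogIntegrand_of_ne ?_).symm
  rintro rfl
  rcases le_total 0 x with h | h
  · simp [uIoo_of_le h] at ht
  · simp [uIoo_of_ge h] at ht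

lemma hasDerivAt_integral_dilogIntegrand {x : ℝ} (hx : x < 1) :
    HasDerivAt (fun u => ∫ t in (0:ℝ)..u, dilogIntegrand t) (dilogIntegrand x) x := by
  refine intervalIntegral.integral_hasDerivAt_right ?_ ?_ (continuousAt_dilogIntegrand hx)
  · refine (continuousOn_dilogIntegrand.mono fun t ht => ?_).intervalIntegrable
    exact lt_of_le_of_lt ht.2 (max_lt one_pos hx)
  · exact continuousOn_dilogIntegrand.stronglyMeasurableAtFilter isOpen_Iio x hx

lemma hasDerivAt_rogersL {x : ℝ} (h0 : 0 < x) (h1 : x < 1) :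
    HasDerivAt rogersL (-(1 / 2) * (Real.log (1 - x) / x + Real.log x / (1 - x))) x := by
  have h1' : 1 - x ≠ 0 := (sub_pos.2 h1).ne'
  have hI := hasDerivAt_integral_dilogIntegrand h1
  have hl : HasDerivAt (fun u : ℝ => Real.log (1 - u)) (-1 / (1 - x)) x :=
    ((hasDerivAt_id x).const_sub 1).log h1'
  have h := hI.neg.add (((Real.hasDerivAt_log h0.ne').const_mul (1 / 2)).mul hl)
  have he : rogersL = (-fun u => ∫ t in (0:ℝ)..u, dilogIntegrand t) +
      (fun u => 1 / 2 * Real.log u) * fun u => Real.log (1 - u) := by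
    funext u
    simp [rogersL, integral_log_div_eq]
  rw [he]
  refine h.congr_deriv ?_
  rw [dilogIntegrand_of_ne h0.ne']
  field_simp
  ring

lemma HasDerivAt.rogersL {f : ℝ → ℝ} {f' y : ℝ} (hf : HasDerivAt f f' y) (h0 : 0 < f y)
    (h1 : f y < 1) :
    HasDerivAt (fun z => _root_.rogersL (f z))
      (-(1 / 2) * (Real.log (1 - f y) / f y + Real.log (f y) / (1 - f y)) * f') y :=
  (hasDerivAt_rogersL h0 h1).comp y hf

lemma tendsto_log_mul_log_zero :
    Tendsto (fun x => Real.log x * Real.log (1 - x)) (𝓝[>] 0) (𝓝 0) := by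
  have h1 : Tendsto (fun x => x * Real.log x) (𝓝[>] 0) (𝓝 0) := by
    simpa using (Real.continuous_mul_log.tendsto 0).mono_left nhdsWithin_le_nhds
  have h2 : Tendsto dilogIntegrand (𝓝[>] 0) (𝓝 (dilogIntegrand 0)) :=
    (continuousAt_dilogIntegrand one_pos).tendsto.mono_left nhdsWithin_le_nhds
  have h := h1.mul h2
  rw [zero_mul] at h
  refine h.congr' ?_
  filter_upwards [self_mem_nhdsWithin] with x (hx : 0 < x)
  rw [dilogIntegrand_of_ne hx.ne']
  field_simp

lemma tendsto_one_sub_nhdsLT : Tendsto (fun x : ℝ => 1 - x) (𝓝[<] 1) (𝓝[>] 0) := by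
  refine tendsto_nhdsWithin_iff.2 ⟨?_, ?_⟩
  · have : Tendsto (fun x : ℝ => 1 - x) (𝓝 1) (𝓝 (1 - 1)) := by
      exact Continuous.tendsto (by fun_prop) 1
    rw [sub_self] at this
    exact this.mono_left nhdsWithin_le_nhds
  · filter_upwards [self_mem_nhdsWithin] with x hx using sub_pos.2 (mem_Iio.1 hx)

lemma tendsto_log_mul_log_one :
    Tendsto (fun x => Real.log x * Real.log (1 - x)) (𝓝[<] 1) (𝓝 0) := by
  refine (tendsto_log_mul_log_zero.comp tendsto_one_sub_nhdsLT).congr fun x => ?_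
  simp [mul_comm]

lemma tendsto_rogersL_zero : Tendsto rogersL (𝓝[>] 0) (𝓝 0) := by
  have h1 := (hasDerivAt_integral_dilogIntegrand one_pos).continuousAt.tendsto.mono_left
    (nhdsWithin_le_nhds (s := Ioi 0))
  have h := h1.neg.add (tendsto_log_mul_log_zero.const_mul (1 / 2))
  simp only [intervalIntegral.integral_same, neg_zero, mul_zero, add_zero] at h
  refine h.congr fun x => ?_
  rw [rogersL, integral_log_div_eq, mul_assoc]

/-- The power series of the dilogarithm, by termwise integration. -/
lemma neg_integral_eq_tsum {x : ℝ} (h0 : 0 < x) (h1 : x < 1) :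
    -(∫ t in (0:ℝ)..x, Real.log (1 - t) / t) = ∑' n : ℕ, x ^ (n + 1) / ((n : ℝ) + 1) ^ 2 := by
  have key := intervalIntegral.hasSum_integral_of_dominated_convergence (a := 0) (b := x)
    (μ := MeasureTheory.volume) (F := fun (n : ℕ) (t : ℝ) => t ^ n / ((n : ℝ) + 1))
    (f := fun t => -(Real.log (1 - t) / t)) (fun n _ => x ^ n)
    (fun n => (by fun_prop : Continuous fun t : ℝ => t ^ n / ((n : ℝ) + 1)).aestronglyMeasurable)
    (fun n => MeasureTheory.ae_of_all _ fun t ht => ?_)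
    (MeasureTheory.ae_of_all _ fun t _ => summable_geometric_of_lt_one h0.le h1)
    intervalIntegrable_const
    (MeasureTheory.ae_of_all _ fun t ht => ?_)
  · rw [intervalIntegral.integral_neg] at key
    rw [← key.tsum_eq]
    refine tsum_congr fun n => ?_
    rw [intervalIntegral.integral_div, integral_pow]
    have : (n : ℝ) + 1 ≠ 0 := by positivity
    simp
    field_simp
  · rw [uIoc_of_le h0.le] at ht
    have ht0 := ht.1.le
    rw [Real.norm_of_nonneg (by positivity)]
    calc t ^ n / ((n : ℝ) + 1) ≤ t ^ n := div_le_self (by positivity) (by simp)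
      _ ≤ x ^ n := by gcongr; exact ht.2
  · rw [uIoc_of_le h0.le] at ht
    have ht0 := ht.1
    have h := (Real.hasSum_pow_div_log_of_abs_lt_one (x := t)
      (by rw [abs_of_pos ht0]; exact ht.2.trans_lt h1)).div_const t
    rw [neg_div] at h
    refine h.congr_fun ?_
    intro n
    field_simp
    ring

lemma hasSum_inv_succ_sq :
    HasSum (fun n : ℕ => 1 / ((n : ℝ) + 1) ^ 2) (Real.pi ^ 2 / 6) := by
  have h := (hasSum_nat_add_iff' 1).2 hasSum_zeta_two
  simpa using h

lemma tendsto_rogersL_one : Tendsto rogersL (𝓝[<] 1) (𝓝 (Real.pi ^ 2 / 6)) := by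
  have hc : ContinuousOn (fun x : ℝ => ∑' n : ℕ, x ^ (n + 1) / ((n : ℝ) + 1) ^ 2) (Icc 0 1) := by
    refine continuousOn_tsum (fun n => by fun_prop) hasSum_inv_succ_sq.summable fun n x hx => ?_
    have := hx.1
    rw [Real.norm_of_nonneg (by positivity)]
    gcongr
    exact pow_le_one₀ hx.1 hx.2
  have h1 := (hc 1 (by simp)).tendsto
  simp only [one_pow, hasSum_inv_succ_sq.tsum_eq] at h1
  have h2 := h1.mono_left (nhdsWithin_mono 1 (Ioo_subset_Icc_self (a := 0)))
  rw [nhdsWithin_Ioo_eq_nhdsLT one_pos] at h2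
  have h := h2.add (tendsto_log_mul_log_one.const_mul (1 / 2))
  simp only [mul_zero, add_zero] at h
  refine h.congr' ?_
  filter_upwards [Ioo_mem_nhdsLT one_pos] with x hx
  rw [rogersL, neg_integral_eq_tsum hx.1 hx.2, mul_assoc]

/-- Euler's reflection formula. -/
lemma rogersL_add_rogersL_one_sub {x : ℝ} (h0 : 0 < x) (h1 : x < 1) :
    rogersL x + rogersL (1 - x) = Real.pi ^ 2 / 6 := by
  have : (𝓝[Ioo (0:ℝ) 1] 1).NeBot := by
    rw [nhdsWithin_Ioo_eq_nhdsLT one_pos]; infer_instance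
  refine eq_of_deriv_zero_of_tendsto (f := fun x => rogersL x + rogersL (1 - x)) (a := 1)
    isOpen_Ioo isPreconnected_Ioo (fun y hy => ?_) ?_ ⟨h0, h1⟩
  · have hy1 : 0 < 1 - y := sub_pos.2 hy.2
    have hs : HasDerivAt (fun z : ℝ => 1 - z) (-1) y := (hasDerivAt_id y).const_sub 1
    refine ((hasDerivAt_rogersL hy.1 hy.2).add
      (hs.rogersL hy1 (by linarith [hy.1]))).congr_deriv ?_
    rw [sub_sub_cancel]
    ring
  · rw [nhdsWithin_Ioo_eq_nhdsLT one_pos]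
    simpa using tendsto_rogersL_one.add (tendsto_rogersL_zero.comp tendsto_one_sub_nhdsLT)

lemma hasDerivAt_five_term {y z : ℝ} (hy : 0 < y) (hz : 0 < z) :
    HasDerivAt (fun y => rogersL (y / (1 + y)) + rogersL (y * z / (1 + y + y * z)) +
      rogersL (z / ((1 + y) * (1 + z))) + rogersL (1 / (1 + y + y * z)) +
      rogersL (1 / (1 + z))) 0 y := by
  have hyz := mul_pos hy hz
  have d0 : HasDerivAt (fun y : ℝ => 1 + y) 1 y := (hasDerivAt_id y).const_add 1
  have dm : HasDerivAt (fun y : ℝ => y * z) z y := by simpa using (hasDerivAt_id y).mul_const z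
  have n1 : 1 + y ≠ 0 := by positivity
  have n2 : 1 + z ≠ 0 := by positivity
  have n3 : 1 + y + y * z ≠ 0 := by positivity
  have h1 := ((hasDerivAt_id' y).div d0 n1).rogersL (by simp; positivity)
    (by simp; rw [div_lt_one (by positivity)]; linarith)
  have h2 := (dm.div (d0.add dm) n3).rogersL (by simp; positivity)
    (by simp; rw [div_lt_one (by positivity)]; linarith)
  have h3 := ((hasDerivAt_const y z).div (d0.mul_const (1 + z)) (mul_ne_zero n1 n2)).rogersL
    (by simp; positivity) (by simp; rw [div_lt_one (by positivity)]; nlinarith)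
  have h4 := ((hasDerivAt_const y (1:ℝ)).div (d0.add dm) n3).rogersL (by simp; positivity)
    (by simp; apply inv_lt_one_of_one_lt₀; linarith)
  have h := (((h1.add h2).add h3).add h4).add_const (rogersL (1 / (1 + z)))
  refine h.congr_deriv ?_
  simp only [Pi.div_apply, Pi.add_apply]
  have e1 : 1 - y / (1 + y) = 1 / (1 + y) := by field_simp; ring
  have e2 : 1 - y * z / (1 + y + y * z) = (1 + y) / (1 + y + y * z) := by field_simp; ring
  have e3 : 1 - z / ((1 + y) * (1 + z)) = (1 + y + y * z) / ((1 + y) * (1 + z)) := by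
    field_simp; ring
  have e4 : 1 - 1 / (1 + y + y * z) = y * (1 + z) / (1 + y + y * z) := by field_simp; ring
  rw [e1, e2, e3, e4]
  rw [Real.log_div hy.ne' n1, Real.log_div one_ne_zero n1, Real.log_div hyz.ne' n3,
    Real.log_div n1 n3, Real.log_div hz.ne' (mul_ne_zero n1 n2),
    Real.log_div n3 (mul_ne_zero n1 n2), Real.log_div one_ne_zero n3,
    Real.log_div (mul_ne_zero hy.ne' n2) n3, Real.log_mul hy.ne' hz.ne', Real.log_mul n1 n2,
    Real.log_mul hy.ne' n2, Real.log_one]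
  -- The logarithms become atoms, so that only an identity of rational functions remains.
  generalize Real.log y = A
  generalize Real.log z = B
  generalize Real.log (1 + y) = C
  generalize Real.log (1 + z) = D
  generalize Real.log (1 + y + y * z) = E
  field_simp
  ring

lemma tendsto_five_term {z : ℝ} (hz : 0 < z) :
    Tendsto (fun y => rogersL (y / (1 + y)) + rogersL (y * z / (1 + y + y * z)) +
      rogersL (z / ((1 + y) * (1 + z))) + rogersL (1 / (1 + y + y * z)) +
      rogersL (1 / (1 + z))) (𝓝[>] 0) (𝓝 (Real.pi ^ 2 / 3)) := by
  have t1 : Tendsto (fun y : ℝ => y / (1 + y)) (𝓝[>] 0) (𝓝[>] 0) := by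
    refine tendsto_nhdsWithin_iff.2 ⟨?_, ?_⟩
    · have : ContinuousAt (fun y : ℝ => y / (1 + y)) 0 :=
        ContinuousAt.div (by fun_prop) (by fun_prop) (by norm_num)
      simpa [ContinuousAt] using this.tendsto.mono_left nhdsWithin_le_nhds
    · filter_upwards [self_mem_nhdsWithin] with y (hy : 0 < y)
      exact mem_Ioi.2 (by positivity)
  have t2 : Tendsto (fun y : ℝ => y * z / (1 + y + y * z)) (𝓝[>] 0) (𝓝[>] 0) := by
    refine tendsto_nhdsWithin_iff.2 ⟨?_, ?_⟩
    · have : ContinuousAt (fun y : ℝ => y * z / (1 + y + y * z)) 0 :=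
        ContinuousAt.div (by fun_prop) (by fun_prop) (by norm_num)
      simpa [ContinuousAt] using this.tendsto.mono_left nhdsWithin_le_nhds
    · filter_upwards [self_mem_nhdsWithin] with y (hy : 0 < y)
      exact mem_Ioi.2 (by positivity)
  have t4 : Tendsto (fun y : ℝ => 1 / (1 + y + y * z)) (𝓝[>] 0) (𝓝[<] 1) := by
    refine tendsto_nhdsWithin_iff.2 ⟨?_, ?_⟩
    · have : ContinuousAt (fun y : ℝ => 1 / (1 + y + y * z)) 0 :=
        ContinuousAt.div (by fun_prop) (by fun_prop) (by norm_num)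
      simpa [ContinuousAt] using this.tendsto.mono_left nhdsWithin_le_nhds
    · filter_upwards [self_mem_nhdsWithin] with y (hy : 0 < y)
      have := mul_pos hy hz
      rw [mem_Iio, div_lt_one (by positivity)]
      linarith
  have hz0 : 0 < z / (1 + z) := by positivity
  have hz1 : z / (1 + z) < 1 := by rw [div_lt_one (by positivity)]; linarith
  have t3 : Tendsto (fun y : ℝ => rogersL (z / ((1 + y) * (1 + z)))) (𝓝[>] 0)
      (𝓝 (rogersL (z / (1 + z)))) := by
    refine (hasDerivAt_rogersL hz0 hz1).continuousAt.tendsto.comp ?_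
    have : ContinuousAt (fun y : ℝ => z / ((1 + y) * (1 + z))) 0 :=
      ContinuousAt.div (by fun_prop) (by fun_prop) (by simp; positivity)
    simpa [ContinuousAt] using this.tendsto.mono_left nhdsWithin_le_nhds
  have h := ((((tendsto_rogersL_zero.comp t1).add (tendsto_rogersL_zero.comp t2)).add t3).add
    (tendsto_rogersL_one.comp t4)).add_const (rogersL (1 / (1 + z)))
  have hr := rogersL_add_rogersL_one_sub hz0 hz1
  have e : 1 - z / (1 + z) = 1 / (1 + z) := by field_simp; ring
  rw [e] at hr
  have hv : 0 + 0 + rogersL (z / (1 + z)) + Real.pi ^ 2 / 6 + rogersL (1 / (1 + z)) =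
      Real.pi ^ 2 / 3 := by linarith
  rw [hv] at h
  exact h

/-- The dilogarithm identity `∑_X L(1 − v_X) = n·π²/6` for the path algebra of the
A₂ quiver `1 → 2` (which has `n = 2` simple modules and five indecomposable
two-term complexes of projectives); each of the five arguments lies in `(0,1)`. -/
theorem a2_dilogarithm_identity (y₁ y₂ : ℝ) (hy₁ : 0 < y₁) (hy₂ : 0 < y₂) :
    y₁ / (1 + y₁) ∈ Set.Ioo (0:ℝ) 1 ∧
    y₁ * y₂ / (1 + y₁ + y₁ * y₂) ∈ Set.Ioo (0:ℝ) 1 ∧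
    y₂ / ((1 + y₁) * (1 + y₂)) ∈ Set.Ioo (0:ℝ) 1 ∧
    1 / (1 + y₁ + y₁ * y₂) ∈ Set.Ioo (0:ℝ) 1 ∧
    1 / (1 + y₂) ∈ Set.Ioo (0:ℝ) 1 ∧
    rogersL (y₁ / (1 + y₁)) + rogersL (y₁ * y₂ / (1 + y₁ + y₁ * y₂)) +
      rogersL (y₂ / ((1 + y₁) * (1 + y₂))) + rogersL (1 / (1 + y₁ + y₁ * y₂)) +
      rogersL (1 / (1 + y₂)) = Real.pi ^ 2 / 3 := by
  have hy := mul_pos hy₁ hy₂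
  refine ⟨⟨by positivity, ?_⟩, ⟨by positivity, ?_⟩, ⟨by positivity, ?_⟩, ⟨by positivity, ?_⟩,
    ⟨by positivity, ?_⟩, ?_⟩
  · rw [div_lt_one (by positivity)]; linarith
  · rw [div_lt_one (by positivity)]; linarith
  · rw [div_lt_one (by positivity)]; nlinarith
  · rw [div_lt_one (by positivity)]; linarith
  · rw [div_lt_one (by positivity)]; linarith
  · have h := eq_of_deriv_zero_of_tendsto isOpen_Ioi isPreconnected_Ioi
      (fun y hy => hasDerivAt_five_term (mem_Ioi.1 hy) hy₂) (tendsto_five_term hy₂)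
      (mem_Ioi.2 hy₁)
    exact h
end

section
/- Let n ≥ 1 and let y₁, …, yₙ be positive real numbers; extend the sequence by y₀ = y_{n+1} = y_{n+2} = 0. For 0 ≤ i ≤ n+1 set FS_i = 1 + y_i and FP_i = 1 + y_{i+1} + y_i·y_{i+1}, and define v_P(i) = FS_{i+1}/FP_i for 0 ≤ i ≤ n+1, v_S(i) = FP_i/(FS_{i+1}·FS_i) for 0 ≤ i ≤ n+1, and v_Q(i) = y_i·FS_{i−1}/FP_{i−1} for 1 ≤ i ≤ n. Then: (a) v_P(i)·v_P(i+1)·v_S(i+1) + v_Q(i+1)·v_S(i)·v_P(i) + v_Q(i+1)·v_Q(i)·v_S(i−1) = 1 for all 1 ≤ i ≤ n−1; (b) v_P(i)·v_S(i) + v_Q(i)·v_S(i−1) = 1 for all 1 ≤ i ≤ n. -/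
/-!
Both families of identities follow from the two telescoping products
`vP i * vS i = 1 / FS i` and `vQ i * vS (i - 1) = y i / FS i`.  Their sum is
`(1 + y i) / FS i = 1`, the equation for `Sᵢ`.  Substituting them into the equation for `Pᵢ`
turns its three terms into `1 / FP i`, `y (i + 1) / FP i` and `y i * y (i + 1) / FP i`, whose
numerators add up to `FP i`.  Nonnegativity of `y` keeps all denominators positive.
-/

/-- The canonical rational functions of the Pellytope algebra (the path algebra of the
quiver `1 ← 2 ← ⋯ ← n` modulo all paths of length two) solve its F̂-equations
`F̂_{Pᵢ} = 1` and `F̂_{Sᵢ} = 1`.  Here `vQ i` is the value attached to `ΣPᵢ`, and the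
extension of `y` by zeros makes `vP 0 = vP n = vP (n+1) = vS 0 = vS (n+1) = 1`,
implementing the convention of dropping those variables. -/
theorem pellytope_v_solve_Fhat_equations (n : ℕ) (hn : 1 ≤ n) (y : ℕ → ℝ)
    (hy : ∀ i, 1 ≤ i → i ≤ n → 0 < y i)
    (hy0 : y 0 = 0) (hyn1 : y (n + 1) = 0) (hyn2 : y (n + 2) = 0)
    (FS FP vP vS vQ : ℕ → ℝ)
    (hFS : ∀ i, i ≤ n + 1 → FS i = 1 + y i)
    (hFP : ∀ i, i ≤ n + 1 → FP i = 1 + y (i + 1) + y i * y (i + 1))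
    (hvP : ∀ i, i ≤ n + 1 → vP i = FS (i + 1) / FP i)
    (hvS : ∀ i, i ≤ n + 1 → vS i = FP i / (FS (i + 1) * FS i))
    (hvQ : ∀ i, 1 ≤ i → i ≤ n → vQ i = y i * FS (i - 1) / FP (i - 1)) :
    (∀ i, 1 ≤ i → i ≤ n - 1 →
      vP i * vP (i + 1) * vS (i + 1) + vQ (i + 1) * vS i * vP i
        + vQ (i + 1) * vQ i * vS (i - 1) = 1) ∧
    (∀ i, 1 ≤ i → i ≤ n → vP i * vS i + vQ i * vS (i - 1) = 1) := by
  have hy' : ∀ i, i ≤ n + 1 → 0 ≤ y i := by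
    intro i hi
    rcases Nat.eq_zero_or_pos i with rfl | h
    · exact hy0.ge
    · rcases Nat.lt_or_ge n i with h2 | h2
      · obtain rfl : i = n + 1 := by omega
        exact hyn1.ge
      · exact (hy i h h2).le
  have hFS0 : ∀ i, i ≤ n + 1 → FS i ≠ 0 := by
    intro i hi
    have := hy' i hi
    rw [hFS i hi]
    positivity
  have hFP0 : ∀ i, i ≤ n → FP i ≠ 0 := by
    intro i hi
    have h1 := hy' i (by omega)
    have h2 := hy' (i + 1) (by omega)
    rw [hFP i (by omega)]
    positivity
  have hPS : ∀ i, i ≤ n → vP i * vS i = 1 / FS i := by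
    intro i hi
    have h1 := hFS0 i (by omega)
    have h2 := hFS0 (i + 1) (by omega)
    have h3 := hFP0 i hi
    rw [hvP i (by omega), hvS i (by omega)]
    field_simp
  have hQS : ∀ i, 1 ≤ i → i ≤ n → vQ i * vS (i - 1) = y i / FS i := by
    intro i hi1 hi
    have h1 := hFS0 i (by omega)
    have h2 := hFS0 (i - 1) (by omega)
    have h3 := hFP0 (i - 1) (by omega)
    rw [hvQ i hi1 hi, hvS (i - 1) (by omega), Nat.sub_add_cancel hi1]
    field_simp
  refine ⟨fun i hi1 hi => ?_, fun i hi1 hi => ?_⟩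
  · have h1 := hFS0 i (by omega)
    have h2 := hFS0 (i + 1) (by omega)
    have h3 := hFP0 i (by omega)
    have hQ := hvQ (i + 1) (by omega) (by omega)
    rw [Nat.add_sub_cancel] at hQ
    calc _ = vP i * (vP (i + 1) * vS (i + 1)) + vQ (i + 1) * (vP i * vS i)
          + vQ (i + 1) * (vQ i * vS (i - 1)) := by ring
      _ = (1 + y (i + 1) + y i * y (i + 1)) / FP i := by
        rw [hPS (i + 1) (by omega), hPS i (by omega), hQS i hi1 (by omega),
          hvP i (by omega), hQ]
        field_simp
      _ = 1 := by rw [← hFP i (by omega), div_self h3]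
  · rw [hPS i hi, hQS i hi1 hi, ← add_div, ← hFS i (by omega), div_self (hFS0 i (by omega))]
end

section
/- Let n ≥ 1, let Ω = {y ∈ ℝⁿ : yᵢ > 0 for all i}, and let G be the abelian group, under pointwise multiplication, of continuous functions Ω → ℝ taking only positive values. Let f₁, …, f_r : Ω → ℝ be differentiable functions whose values all lie in the open interval (0,1), so that each fᵢ and each 1 − fᵢ is an element of G. Suppose that in the tensor product of abelian groups G ⊗_ℤ G, the element ∑_{i=1}^r fᵢ ⊗ (1 − fᵢ) lies in the subgroup S²G generated by all elements of the form a ⊗ b + b ⊗ a with a, b ∈ G. Then the function y ↦ ∑_{i=1}^r L(fᵢ(y)) is constant on Ω, where L is the Rogers dilogarithm. -/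
/-!
Write `u = log f` and `v = log (1 - f)`. The derivative of `L` gives
`d(L ∘ f) = -(1/2) (v du - u dv)` (`hasDerivAt_rogersL`).

For points `y, z ∈ Ω`, the map `a ⊗ b ↦ log a(y) · log b(z) - log a(z) · log b(y)` is well
defined on `G ⊗ G` and kills `S²G` by antisymmetry (`wedgeEval_eq_zero`). Applied to
`∑ fᵢ ⊗ (1 - fᵢ)` it yields `∑ (uᵢ(y) vᵢ(z) - uᵢ(z) vᵢ(y)) = 0` for all `y, z`. With `z` fixed,
differentiating in `y` at `y = z` gives `∑ (vᵢ duᵢ - uᵢ dvᵢ) = 0` at `z`. Only the `fᵢ` need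
to be differentiable, not the elements of `G` that occur in a representation of the sum in `S²G`.
Hence `∑ L(fᵢ)` has zero derivative on the convex open set `Ω`, so it is constant.
-/

open scoped TensorProduct

namespace FrenkelSzenes

/-- The Rogers dilogarithm, for `0 < x < 1`:
`L(x) = −∫₀ˣ log(1−t)/t dt + (1/2)·log x · log(1−x)`. -/
noncomputable def rogersL (x : ℝ) : ℝ :=
  (-(∫ t in (0:ℝ)..x, Real.log (1 - t) / t)) + (1 / 2) * Real.log x * Real.log (1 - x)

/-- The positive orthant `Ω = {y ∈ ℝⁿ : yᵢ > 0 for all i}`. -/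
def Omega (n : ℕ) : Set (Fin n → ℝ) := {y | ∀ i, 0 < y i}

/-- The abelian group `G` of continuous positive-valued functions on `Ω` under
pointwise multiplication, realised as the subgroup of the group of units of the ring
`C(Ω, ℝ)` consisting of the pointwise positive ones. -/
def G (n : ℕ) : Subgroup (C(↥(Omega n), ℝ))ˣ where
  carrier := {u | ∀ x, 0 < (u : C(↥(Omega n), ℝ)) x}
  one_mem' := by
    intro x
    simp
  mul_mem' := by
    intro a b ha hb x
    have := mul_pos (ha x) (hb x)
    simpa using this
  inv_mem' := by
    intro a ha x
    have h1 : ((a⁻¹ : (C(↥(Omega n), ℝ))ˣ) : C(↥(Omega n), ℝ)) x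
        * ((a : C(↥(Omega n), ℝ)) x) = 1 := by
      have h := congrArg (fun f : C(↥(Omega n), ℝ) => f x) a.inv_mul
      simpa only [ContinuousMap.mul_apply, ContinuousMap.one_apply] using h
    have h2 := eq_inv_of_mul_eq_one_left h1
    rw [h2]
    exact inv_pos.mpr (ha x)

/-- The subgroup `S²G` of `G ⊗_ℤ G` generated by the elements `a ⊗ b + b ⊗ a`. -/
noncomputable def S2G (n : ℕ) :
    AddSubgroup (TensorProduct ℤ (Additive (G n)) (Additive (G n))) :=
  AddSubgroup.closure
    {z | ∃ a b : G n,
      z = Additive.ofMul a ⊗ₜ[ℤ] Additive.ofMul b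
        + Additive.ofMul b ⊗ₜ[ℤ] Additive.ofMul a}

/-- The derivative of the Rogers dilogarithm; it is `-(1/2) (v u' - u v')` for `u = log x`
and `v = log (1 - x)`. -/
lemma hasDerivAt_rogersL {x : ℝ} (hx : x ∈ Set.Ioo (0 : ℝ) 1) :
    HasDerivAt rogersL
      (-(1 / 2) * (Real.log (1 - x) * x⁻¹ - Real.log x * (-(1 - x)⁻¹))) x := by
  obtain ⟨h0, h1⟩ := hx
  have h1' : 1 - x ≠ 0 := by linarith
  have hlog : HasDerivAt (fun t : ℝ => Real.log (1 - t)) (-(1 - x)⁻¹) x := by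
    have := ((hasDerivAt_id x).const_sub 1).log h1'
    simpa [div_eq_mul_inv] using this
  -- The integrand has a removable singularity at `0`: it agrees on `(0, x]` with the
  -- continuous difference quotient of `log (1 - t)` at `0`.
  have hint : IntervalIntegrable (fun t : ℝ => Real.log (1 - t) / t)
      MeasureTheory.volume 0 x := by
    have hc : ContinuousOn (dslope (fun t : ℝ => Real.log (1 - t)) 0) (Set.Iio 1) := by
      rw [continuousOn_dslope (Iio_mem_nhds one_pos)]
      refine ⟨?_, ?_⟩
      · refine ContinuousOn.log (by fun_prop) ?_
        intro t ht
        have : t < 1 := ht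
        linarith
      · exact (DifferentiableAt.log (by fun_prop) (by norm_num))
    have hi : IntervalIntegrable (dslope (fun t : ℝ => Real.log (1 - t)) 0)
        MeasureTheory.volume 0 x := by
      refine (hc.mono ?_).intervalIntegrable
      rw [Set.uIcc_of_le h0.le]
      intro t ht
      exact lt_of_le_of_lt ht.2 h1
    refine hi.congr ?_
    intro t ht
    rw [Set.uIoc_of_le h0.le] at ht
    simp [dslope_of_ne _ ht.1.ne', slope_def_field]
  have hcont : ContinuousAt (fun t : ℝ => Real.log (1 - t) / t) x :=
    hlog.continuousAt.div continuousAt_id h0.ne'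
  have hmeas : Measurable (fun t : ℝ => Real.log (1 - t) / t) := by fun_prop
  have hI := intervalIntegral.integral_hasDerivAt_right hint
    hmeas.stronglyMeasurable.stronglyMeasurableAtFilter hcont
  have hL := hI.neg.add (((Real.hasDerivAt_log h0.ne').const_mul (1 / 2)).mul hlog)
  refine HasDerivAt.congr_deriv hL ?_
  ring

/-- Evaluation of the logarithm at a point, as a homomorphism to the additive group `ℝ`. -/
noncomputable def logEval {n : ℕ} (y : Omega n) : Additive (G n) →+ ℝ where
  toFun a := Real.log (((a.toMul : (C(↥(Omega n), ℝ))ˣ) : C(↥(Omega n), ℝ)) y)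
  map_zero' := by simp
  map_add' a b := by
    have ha := (a.toMul).2 y
    have hb := (b.toMul).2 y
    simpa using Real.log_mul ha.ne' hb.ne'

/-- The additive map `a ⊗ b ↦ log a(y) · log b(z) - log a(z) · log b(y)`. -/
noncomputable def wedgeEval {n : ℕ} (y z : Omega n) :
    TensorProduct ℤ (Additive (G n)) (Additive (G n)) →+ ℝ :=
  LinearMap.toAddMonoidHom <| TensorProduct.lift
    ((LinearMap.mul ℤ ℝ).compl₁₂ (logEval y).toIntLinearMap (logEval z).toIntLinearMap
      - (LinearMap.mul ℤ ℝ).compl₁₂ (logEval z).toIntLinearMap (logEval y).toIntLinearMap)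

lemma wedgeEval_tmul {n : ℕ} (y z : Omega n) (a b : Additive (G n)) :
    wedgeEval y z (a ⊗ₜ[ℤ] b) = logEval y a * logEval z b - logEval z a * logEval y b := by
  simp [wedgeEval]

lemma wedgeEval_eq_zero {n : ℕ} (y z : Omega n)
    {t : TensorProduct ℤ (Additive (G n)) (Additive (G n))} (ht : t ∈ S2G n) :
    wedgeEval y z t = 0 := by
  unfold S2G at ht
  induction ht using AddSubgroup.closure_induction with
  | mem t ht =>
    obtain ⟨a, b, rfl⟩ := ht
    rw [map_add, wedgeEval_tmul, wedgeEval_tmul]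
    ring
  | zero => exact map_zero _
  | add s t _ _ hs ht => rw [map_add, hs, ht, add_zero]
  | neg t _ ht => rw [map_neg, ht, neg_zero]

lemma isOpen_Omega (n : ℕ) : IsOpen (Omega n) := by
  have : Omega n = ⋂ i, {y : Fin n → ℝ | 0 < y i} := by
    ext y
    simp [Omega]
  rw [this]
  exact isOpen_iInter_of_finite fun i => isOpen_lt continuous_const (continuous_apply i)

lemma convex_Omega (n : ℕ) : Convex ℝ (Omega n) := by
  have : Omega n = Set.univ.pi fun _ : Fin n => Set.Ioi (0 : ℝ) := by
    ext y
    simp [Omega]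
  rw [this]
  exact convex_pi fun _ _ => convex_Ioi 0

/-- Frenkel–Szenes' proposition (multi-variable form): if `f₁, …, f_r` are
differentiable functions on `Ω` with values in `(0,1)` (so that each `fᵢ` and each
`1 − fᵢ` gives an element of the group `G` of positive continuous functions on `Ω`),
and `∑ᵢ fᵢ ⊗ (1 − fᵢ)` lies in the subgroup `S²G` of `G ⊗_ℤ G`, then
`y ↦ ∑ᵢ L(fᵢ(y))` is constant on `Ω`, where `L` is the Rogers dilogarithm. -/
theorem sum_rogersL_constant (n : ℕ) (hn : 1 ≤ n) (r : ℕ)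
    (f : Fin r → (Fin n → ℝ) → ℝ)
    (hdiff : ∀ i, DifferentiableOn ℝ (f i) (Omega n))
    (hval : ∀ i, ∀ y ∈ Omega n, f i y ∈ Set.Ioo (0 : ℝ) 1)
    (g h : Fin r → G n)
    (hg : ∀ (i : Fin r) (y : ↥(Omega n)),
      (((g i : (C(↥(Omega n), ℝ))ˣ) : C(↥(Omega n), ℝ))) y = f i y.1)
    (hh : ∀ (i : Fin r) (y : ↥(Omega n)),
      (((h i : (C(↥(Omega n), ℝ))ˣ) : C(↥(Omega n), ℝ))) y = 1 - f i y.1)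
    (hS : (∑ i, Additive.ofMul (g i) ⊗ₜ[ℤ] Additive.ofMul (h i)) ∈ S2G n) :
    ∀ y ∈ Omega n, ∀ y' ∈ Omega n,
      ∑ i, rogersL (f i y) = ∑ i, rogersL (f i y') := by
  have hfd : ∀ z ∈ Omega n, HasFDerivAt (fun y => ∑ i, rogersL (f i y))
      (0 : (Fin n → ℝ) →L[ℝ] ℝ) z := by
    intro z hz
    have hnhds : Omega n ∈ nhds z := (isOpen_Omega n).mem_nhds hz
    have hD : ∀ i, HasFDerivAt (f i) (fderiv ℝ (f i) z) z := fun i =>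
      ((hdiff i).differentiableAt hnhds).hasFDerivAt
    have hu : ∀ i, HasFDerivAt (fun y => Real.log (f i y))
        ((f i z)⁻¹ • fderiv ℝ (f i) z) z := fun i =>
      (hD i).log (hval i z hz).1.ne'
    have hv : ∀ i, HasFDerivAt (fun y => Real.log (1 - f i y))
        ((1 - f i z)⁻¹ • (-fderiv ℝ (f i) z)) z := fun i =>
      ((hD i).const_sub 1).log (sub_pos.mpr (hval i z hz).2).ne'
    -- The image of the hypothesis under `wedgeEval y z`, to be differentiated in `y` at `z`.
    have hW : ∀ y ∈ Omega n, ∑ i, (Real.log (f i y) * Real.log (1 - f i z)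
        - Real.log (f i z) * Real.log (1 - f i y)) = 0 := by
      intro y hy
      have := wedgeEval_eq_zero ⟨y, hy⟩ ⟨z, hz⟩ hS
      simpa [map_sum, wedgeEval_tmul, logEval, hg, hh] using this
    have hWd := HasFDerivAt.fun_sum (u := Finset.univ) fun i _ =>
      ((hu i).mul_const (Real.log (1 - f i z))).sub ((hv i).const_mul (Real.log (f i z)))
    have hW0 := hWd.unique ((hasFDerivAt_const (0 : ℝ) z).congr_of_eventuallyEq
      (Filter.eventuallyEq_of_mem hnhds hW))
    have hL := HasFDerivAt.fun_sum (u := Finset.univ) fun i _ =>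
      (hasDerivAt_rogersL (hval i z hz)).comp_hasFDerivAt z (hD i)
    refine hL.congr_fderiv ?_
    have hW0' := congrArg (fun T => (-(1 / 2) : ℝ) • T) hW0
    simp only [smul_zero, Finset.smul_sum] at hW0'
    rw [← hW0']
    refine Finset.sum_congr rfl fun i _ => ?_
    module
  intro y hy y' hy'
  refine (convex_Omega n).is_const_of_fderivWithin_eq_zero (𝕜 := ℝ)
    (f := fun y => ∑ i, rogersL (f i y))
    (fun z hz => (hfd z hz).differentiableAt.differentiableWithinAt) ?_ hy hy'
  intro z hz
  exact (hfd z hz).hasFDerivWithinAt.fderivWithin ((isOpen_Omega n).uniqueDiffWithinAt hz)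

end FrenkelSzenes
end

section
/- Let K = ℂ(y₁, y₂) be the field of fractions of the polynomial ring ℂ[y₁, y₂], and let φ : ℂ[u₁,u₂,u₃,u₄,u₅,u₆] → K be the ℂ-algebra homomorphism determined by u₁ ↦ (1+y₂)/(1+y₂+y₁y₂), u₂ ↦ (1+y₁)/(1+y₁+y₁y₂), u₃ ↦ (1+y₂+y₁y₂)/((1+y₁)(1+y₂)), u₄ ↦ (1+y₁+y₁y₂)/((1+y₁)(1+y₂)), u₅ ↦ (y₁+y₁y₂)/(1+y₁+y₁y₂), u₆ ↦ (y₂+y₁y₂)/(1+y₂+y₁y₂). Then the kernel of φ is exactly the ideal generated by the four polynomials u₁u₂u₄ + u₁u₃u₆ + u₄u₅u₆ − 1, u₁u₂u₃ + u₂u₄u₅ + u₃u₅u₆ − 1, u₁u₃ + u₄u₅ − 1, u₂u₄ + u₃u₆ − 1; in particular this ideal is prime. -/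
/-!
Write `a, b, c, d, e, f` for the classes of `u₁, …, u₆` in `A = ℂ[u₁, …, u₆] / I`. The relations
say `a + def = 1`, `b + cef = 1`, `ac + de = 1`, `bd + cf = 1`. The parametrization satisfies them,
so it factors through `φ : A → ℂ(y₁, y₂)`, and the claim is that `φ` is injective. This is proved
on an open cover of `Spec A` by three pieces, each of which is an open part of an affine plane:

* where `bd` is invertible, every generator is a rational function of `c` and `f`
  (denominators `1 - cf = bd` and `(1 - cf)² + cf(1 - c) = bd²`);
* where `ac` is invertible, the same holds for `d` and `e`, by the symmetry exchanging the
  two vertices of the quiver;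
* where `cd` is invertible, every generator is a rational function of `p = de` and `q = cf`,
  since `c = 1 - p + pq` and `d = 1 - q + pq`.

In each case the two coordinates have algebraically independent images in `ℂ(y₁, y₂)`, because
`y₁, y₂` are rational functions of them (`algebraicIndependent_pair`). Hence an element `x` of the
kernel of `φ` is killed by a power of each of `bd`, `ac`, `cd` (`exists_pow_mul_eq_zero`). As
`1 = (ac + de)(bd + cf)` lies in the ideal `(bd, ac, cd)`, it follows that `x = 0`.
-/

open MvPolynomial

namespace PreprojectiveA2Kernel

/-- The field `ℂ(y₁, y₂)` of rational functions in two variables. -/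
abbrev K : Type := FractionRing (MvPolynomial (Fin 2) ℂ)

/-- The rational function `yᵢ` in `ℂ(y₁, y₂)` (with `y 0 = y₁`, `y 1 = y₂`). -/
noncomputable def y (i : Fin 2) : K := algebraMap (MvPolynomial (Fin 2) ℂ) K (X i)

set_option maxHeartbeats 1000000 in
/-- The canonical rational parametrization `v_X` for the preprojective algebra `Π_{A₂}`:
the images of `u_{P₁}, u_{P₂}, u_{S₁}, u_{S₂}, u_{ΣP₁}, u_{ΣP₂}`. -/
noncomputable def v : Fin 6 → K :=
  ![(1 + y 1) / (1 + y 1 + y 0 * y 1),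
    (1 + y 0) / (1 + y 0 + y 0 * y 1),
    (1 + y 1 + y 0 * y 1) / ((1 + y 0) * (1 + y 1)),
    (1 + y 0 + y 0 * y 1) / ((1 + y 0) * (1 + y 1)),
    (y 0 + y 0 * y 1) / (1 + y 0 + y 0 * y 1),
    (y 1 + y 0 * y 1) / (1 + y 1 + y 0 * y 1)]

/-- The ideal generated by the F̂-equation relations of `Π_{A₂}`. -/
noncomputable def I : Ideal (MvPolynomial (Fin 6) ℂ) :=
  Ideal.span
    {X 0 * X 1 * X 3 + X 0 * X 2 * X 5 + X 3 * X 4 * X 5 - 1,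
     X 0 * X 1 * X 2 + X 1 * X 3 * X 4 + X 2 * X 4 * X 5 - 1,
     X 0 * X 2 + X 3 * X 4 - 1,
     X 1 * X 3 + X 2 * X 5 - 1}

/-- If all generators of `A` become polynomials in `p` after multiplication by `s`, itself a
polynomial in `p`, and `p` is algebraically independent after applying `φ`, then `φ` is injective
up to `s`-power torsion. -/
lemma exists_pow_mul_eq_zero {A L ι κ : Type*} [CommRing A] [Algebra ℂ A] [CommRing L]
    [Algebra ℂ L] (φ : A →ₐ[ℂ] L) (u : ι → A) (hu : Algebra.adjoin ℂ (Set.range u) = ⊤)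
    (p : κ → A) (hp : AlgebraicIndependent ℂ fun i => φ (p i)) (s : A)
    (hs : s ∈ Algebra.adjoin ℂ (Set.range p))
    (h : ∀ i, s * u i ∈ Algebra.adjoin ℂ (Set.range p)) (x : A) (hx : φ x = 0) :
    ∃ n : ℕ, s ^ n * x = 0 := by
  set S := Algebra.adjoin ℂ (Set.range p) with hS
  have key : ∃ n : ℕ, s ^ n * x ∈ S := by
    have hxu : x ∈ Algebra.adjoin ℂ (Set.range u) := hu ▸ Algebra.mem_top
    clear hx
    induction hxu using Algebra.adjoin_induction with
    | mem x hx =>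
      obtain ⟨i, rfl⟩ := hx
      exact ⟨1, by simpa using h i⟩
    | algebraMap r => exact ⟨0, by simp [S.algebraMap_mem r]⟩
    | add x y _ _ ihx ihy =>
      obtain ⟨n, hn⟩ := ihx
      obtain ⟨m, hm⟩ := ihy
      refine ⟨n + m, ?_⟩
      have : s ^ (n + m) * (x + y) = s ^ m * (s ^ n * x) + s ^ n * (s ^ m * y) := by ring
      rw [this]
      exact add_mem (mul_mem (pow_mem hs m) hn) (mul_mem (pow_mem hs n) hm)
    | mul x y _ _ ihx ihy =>
      obtain ⟨n, hn⟩ := ihx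
      obtain ⟨m, hm⟩ := ihy
      refine ⟨n + m, ?_⟩
      have : s ^ (n + m) * (x * y) = (s ^ n * x) * (s ^ m * y) := by ring
      rw [this]
      exact mul_mem hn hm
  obtain ⟨n, hn⟩ := key
  refine ⟨n, ?_⟩
  rw [hS, Algebra.adjoin_range_eq_range_aeval] at hn
  obtain ⟨g, hg⟩ := hn
  have hg' : aeval p g = s ^ n * x := hg
  have h0 : aeval (fun i => φ (p i)) g = 0 := by
    have h1 : φ (aeval p g) = aeval (fun i => φ (p i)) g := by
      rw [← AlgHom.comp_apply, comp_aeval]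
    rw [← h1, hg', map_mul, hx, mul_zero]
  have hg0 : g = 0 := (injective_iff_map_eq_zero _).1 hp g h0
  rw [← hg', hg0, map_zero]

lemma two_le_trdeg : (2 : Cardinal) ≤ Algebra.trdeg ℂ K := by
  have h : AlgebraicIndependent ℂ (fun i => y i) := by
    have h1 : AlgebraicIndependent ℂ (X : Fin 2 → MvPolynomial (Fin 2) ℂ) :=
      algebraicIndependent_X (Fin 2) ℂ
    exact h1.map' (f := IsScalarTower.toAlgHom ℂ (MvPolynomial (Fin 2) ℂ) K)
      (IsFractionRing.injective _ _)
  simpa using h.cardinalMk_le_trdeg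

/-- Two elements of `ℂ(y₁, y₂)` over which `y₁` and `y₂` are algebraic are algebraically
independent, since `ℂ(y₁, y₂)` has transcendence degree two. -/
lemma algebraicIndependent_pair (x : Fin 2 → K)
    (h : ∀ i, IsAlgebraic (Algebra.adjoin ℂ (Set.range x)) (y i)) :
    AlgebraicIndependent ℂ x := by
  have hpoly : ∀ g : MvPolynomial (Fin 2) ℂ,
      IsAlgebraic (Algebra.adjoin ℂ (Set.range x)) (algebraMap _ K g) := by
    intro g
    induction g using MvPolynomial.induction_on with
    | C r =>
      have : algebraMap (MvPolynomial (Fin 2) ℂ) K (C r) =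
          algebraMap (Algebra.adjoin ℂ (Set.range x)) K (algebraMap ℂ _ r) := rfl
      rw [this]
      exact isAlgebraic_algebraMap _
    | add p q hp hq => rw [map_add]; exact hp.add hq
    | mul_X p i hp => rw [map_mul]; exact hp.mul (h i)
  have : Algebra.IsAlgebraic (Algebra.adjoin ℂ (Set.range x)) K := by
    refine ⟨fun z => ?_⟩
    obtain ⟨n, m, -, rfl⟩ := IsFractionRing.div_surjective (A := MvPolynomial (Fin 2) ℂ) z
    rw [div_eq_mul_inv]
    exact (hpoly n).mul (hpoly m).inv
  exact (Algebra.IsAlgebraic.isTranscendenceBasis_of_le_trdeg_of_finite ℂ x (by simpa using two_le_trdeg)).1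

lemma algebraMap_ne_zero_of_constantCoeff {g : MvPolynomial (Fin 2) ℂ}
    (hg : constantCoeff g ≠ 0) : algebraMap _ K g ≠ 0 := by
  intro h
  have : g = 0 := IsFractionRing.injective (MvPolynomial (Fin 2) ℂ) K (by rw [h, map_zero])
  exact hg (by rw [this, map_zero])

lemma one_add_y_ne (i : Fin 2) : 1 + y i ≠ 0 := by
  have := algebraMap_ne_zero_of_constantCoeff (g := 1 + X i) (by simp)
  simpa only [map_add, map_one, y] using this

lemma one_add_y_add_ne (i j : Fin 2) : 1 + y i + y j * y i ≠ 0 := by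
  have := algebraMap_ne_zero_of_constantCoeff (g := 1 + X i + X j * X i) (by simp)
  simpa only [map_add, map_one, map_mul, y] using this

/-- Solving `q = cf = Y/(1 + Y)` and `c = 1 - p + pq`, with `p = X/(1 + X)`, for `X` and `Y`. -/
lemma solve_y {F : Type*} [Field F] (X Y c f : F) (hX : 1 + X ≠ 0) (hY : 1 + Y ≠ 0)
    (hXY : 1 + Y + X * Y ≠ 0) (hc : c = (1 + Y + X * Y) / ((1 + X) * (1 + Y)))
    (hf : f = (Y + X * Y) / (1 + Y + X * Y)) :
    Y = c * f * (1 - c * f)⁻¹ ∧ X = (1 - c) * (c - c * f)⁻¹ := by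
  have hXY' : 1 + Y + Y * X ≠ 0 := by rwa [mul_comm Y X]
  have h1 : c * f = Y / (1 + Y) := by
    rw [hc, hf]; field_simp
  have h2 : 1 - c * f = 1 / (1 + Y) := by
    rw [h1]; field_simp; ring
  have h3 : c - c * f = 1 / ((1 + X) * (1 + Y)) := by
    rw [h1, hc]; field_simp; ring
  have h4 : 1 - c = X / ((1 + X) * (1 + Y)) := by
    rw [hc]; field_simp; ring
  constructor
  · rw [h2, h1]; field_simp
  · rw [h3, h4]; field_simp

/-- The coordinates `(c, f)` (for `i = 0, j = 1`) and `(d, e)` (for `i = 1, j = 0`) are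
algebraically independent. -/
lemma algebraicIndependent_chart (i j : Fin 2) (hij : ∀ k, k = i ∨ k = j) (x : Fin 2 → K)
    (hc : x 0 = (1 + y j + y i * y j) / ((1 + y i) * (1 + y j)))
    (hf : x 1 = (y j + y i * y j) / (1 + y j + y i * y j)) :
    AlgebraicIndependent ℂ x := by
  obtain ⟨hj, hi⟩ := solve_y (y i) (y j) (x 0) (x 1) (one_add_y_ne i) (one_add_y_ne j)
    (one_add_y_add_ne j i) hc hf
  have hx : ∀ k, IsAlgebraic (Algebra.adjoin ℂ (Set.range x)) (x k) := fun k =>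
    isAlgebraic_algebraMap
      (⟨x k, Algebra.subset_adjoin ⟨k, rfl⟩⟩ : Algebra.adjoin ℂ (Set.range x))
  have hcf := (hx 0).mul (hx 1)
  refine algebraicIndependent_pair x fun k => ?_
  rcases hij k with rfl | rfl
  · rw [hi]
    exact (isAlgebraic_one.sub (hx 0)).mul ((hx 0).sub hcf).inv
  · rw [hj]
    exact hcf.mul (isAlgebraic_one.sub hcf).inv

/-- The coordinates `(de, cf)` are algebraically independent. -/
lemma algebraicIndependent_middle (x : Fin 2 → K) (h : ∀ k, x k = y k / (1 + y k)) :
    AlgebraicIndependent ℂ x := by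
  refine algebraicIndependent_pair x fun k => ?_
  have hx : IsAlgebraic (Algebra.adjoin ℂ (Set.range x)) (x k) :=
    isAlgebraic_algebraMap
      (⟨x k, Algebra.subset_adjoin ⟨k, rfl⟩⟩ : Algebra.adjoin ℂ (Set.range x))
  have hk : y k = x k * (1 - x k)⁻¹ := by
    have h0 := one_add_y_ne k
    have h1 : 1 - x k = 1 / (1 + y k) := by rw [h]; field_simp; ring
    rw [h1, h]; field_simp
  rw [hk]
  exact hx.mul (isAlgebraic_one.sub hx).inv

/-- On the piece where `bd` is invertible, all generators are polynomials in `c, f` up to the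
denominator `b²d³`, which is itself a polynomial in `c, f`. -/
lemma chart_mem {A : Type*} [CommRing A] [Algebra ℂ A] (a b c d e f : A) (S : Subalgebra ℂ A)
    (hc : c ∈ S) (hf : f ∈ S) (r1 : a + d * e * f = 1) (r2 : b + c * e * f = 1)
    (r3 : a * c + d * e = 1) (r4 : b * d + c * f = 1) :
    b ^ 2 * d ^ 3 ∈ S ∧ ∀ z ∈ [a, b, c, d, e, f], b ^ 2 * d ^ 3 * z ∈ S := by
  -- `bd`, `bd²e` and `bd²` are polynomials in `c, f`
  have ht : b * d ∈ S := by
    have : b * d = 1 - c * f := by linear_combination r4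
    rw [this]
    exact sub_mem (one_mem _) (mul_mem hc hf)
  have hde : b * d * (d * e) = 1 - c := by
    linear_combination d * e * r4 - c * r1 + r3
  have hde' : b * d * (d * e) ∈ S := by
    rw [hde]
    exact sub_mem (one_mem _) hc
  have hw : b * d * d ∈ S := by
    have : b * d * d = (b * d) * (b * d) + c * f * (b * d * (d * e)) := by
      linear_combination -(b * d * d) * r2
    rw [this]
    exact add_mem (mul_mem ht ht) (mul_mem (mul_mem hc hf) hde')
  have hs : b ^ 2 * d ^ 3 ∈ S := by
    have : b ^ 2 * d ^ 3 = (b * d) * (b * d * d) := by ring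
    rw [this]
    exact mul_mem ht hw
  refine ⟨hs, ?_⟩
  simp only [List.mem_cons, List.not_mem_nil, or_false]
  rintro z (rfl | rfl | rfl | rfl | rfl | rfl)
  · have : b ^ 2 * d ^ 3 * z = (b * d * d) * (b * d - b * d * (d * e) * f) := by
      linear_combination b ^ 2 * d ^ 3 * r1
    rw [this]
    exact mul_mem hw (sub_mem ht (mul_mem hde' hf))
  · have : z ^ 2 * d ^ 3 * z = (z * d) ^ 3 := by ring
    rw [this]
    exact pow_mem ht 3
  · exact mul_mem hs hc
  · have : b ^ 2 * z ^ 3 * z = (b * z * z) ^ 2 := by ring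
    rw [this]
    exact pow_mem hw 2
  · have : b ^ 2 * d ^ 3 * z = (b * d) * (b * d * (d * z)) := by ring
    rw [this]
    exact mul_mem ht hde'
  · exact mul_mem hs hf

/-- On the piece where `cd` is invertible, all generators are polynomials in `de, cf` up to the
denominator `cd`, and `c, d` are polynomials in `de, cf`. -/
lemma middle_mem {A : Type*} [CommRing A] [Algebra ℂ A] (a b c d e f : A) (S : Subalgebra ℂ A)
    (hp : d * e ∈ S) (hq : c * f ∈ S) (r1 : a + d * e * f = 1) (r2 : b + c * e * f = 1)
    (r3 : a * c + d * e = 1) (r4 : b * d + c * f = 1) :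
    c * d ∈ S ∧ ∀ z ∈ [a, b, c, d, e, f], c * d * z ∈ S := by
  have hc : c ∈ S := by
    have : c = 1 - d * e + (d * e) * (c * f) := by linear_combination -c * r1 + r3
    rw [this]
    exact add_mem (sub_mem (one_mem _) hp) (mul_mem hp hq)
  have hd : d ∈ S := by
    have : d = 1 - c * f + (d * e) * (c * f) := by linear_combination -d * r2 + r4
    rw [this]
    exact add_mem (sub_mem (one_mem _) hq) (mul_mem hp hq)
  refine ⟨mul_mem hc hd, ?_⟩
  simp only [List.mem_cons, List.not_mem_nil, or_false]
  rintro z (rfl | rfl | rfl | rfl | rfl | rfl)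
  · have : c * d * z = d * (1 - d * e) := by linear_combination d * r3
    rw [this]
    exact mul_mem hd (sub_mem (one_mem _) hp)
  · have : c * d * z = c * (1 - c * f) := by linear_combination c * r4
    rw [this]
    exact mul_mem hc (sub_mem (one_mem _) hq)
  · exact mul_mem (mul_mem hc hd) hc
  · exact mul_mem (mul_mem hc hd) hd
  · have : c * d * z = c * (d * z) := by ring
    rw [this]
    exact mul_mem hc hp
  · have : c * d * z = d * (c * z) := by ring
    rw [this]
    exact mul_mem hd hq

/-- A ring generated by elements satisfying the relations of `I`, in simplified form, embeds into `ℂ(y₁, y₂)` under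
any homomorphism carrying the generators to `v`. -/
lemma eq_zero_of_map_eq_zero {A : Type*} [CommRing A] [Algebra ℂ A] (φ : A →ₐ[ℂ] K)
    (u : Fin 6 → A) (hu : Algebra.adjoin ℂ (Set.range u) = ⊤) (hφ : ∀ i, φ (u i) = v i)
    (r1 : u 0 + u 3 * u 4 * u 5 = 1) (r2 : u 1 + u 2 * u 4 * u 5 = 1)
    (r3 : u 0 * u 2 + u 3 * u 4 = 1) (r4 : u 1 * u 3 + u 2 * u 5 = 1)
    (x : A) (hx : φ x = 0) : x = 0 := by
  have h2 : φ (u 2) = (1 + y 1 + y 0 * y 1) / ((1 + y 0) * (1 + y 1)) := hφ 2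
  have h3 : φ (u 3) = (1 + y 0 + y 0 * y 1) / ((1 + y 0) * (1 + y 1)) := hφ 3
  have h4 : φ (u 4) = (y 0 + y 0 * y 1) / (1 + y 0 + y 0 * y 1) := hφ 4
  have h5 : φ (u 5) = (y 1 + y 0 * y 1) / (1 + y 1 + y 0 * y 1) := hφ 5
  have hmem : ∀ (p : Fin 2 → A) k, p k ∈ Algebra.adjoin ℂ (Set.range p) := fun p k =>
    Algebra.subset_adjoin ⟨k, rfl⟩
  have hlist : ∀ i, u i ∈ [u 0, u 1, u 2, u 3, u 4, u 5] := by
    intro i; fin_cases i <;> simp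
  -- the piece where `bd` is invertible
  obtain ⟨n₁, hn₁⟩ : ∃ n : ℕ, (u 1 ^ 2 * u 3 ^ 3) ^ n * x = 0 := by
    have hm := chart_mem _ _ _ _ _ _ (Algebra.adjoin ℂ (Set.range ![u 2, u 5]))
      (hmem ![u 2, u 5] 0) (hmem ![u 2, u 5] 1) r1 r2 r3 r4
    refine exists_pow_mul_eq_zero φ u hu ![u 2, u 5] ?_ _ hm.1
      (fun i => hm.2 _ (hlist i)) x hx
    exact algebraicIndependent_chart 0 1 (by decide) _ h2 h5
  -- the piece where `ac` is invertible
  obtain ⟨n₂, hn₂⟩ : ∃ n : ℕ, (u 0 ^ 2 * u 2 ^ 3) ^ n * x = 0 := by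
    have hm := chart_mem (u 1) (u 0) (u 3) (u 2) (u 5) (u 4)
      (Algebra.adjoin ℂ (Set.range ![u 3, u 4]))
      (hmem ![u 3, u 4] 0) (hmem ![u 3, u 4] 1) (by linear_combination r2)
      (by linear_combination r1) (by linear_combination r4) (by linear_combination r3)
    refine exists_pow_mul_eq_zero φ u hu ![u 3, u 4] ?_ _ hm.1
      (fun i => hm.2 _ ?_) x hx
    · refine algebraicIndependent_chart 1 0 (by decide) _ ?_ ?_
      · exact h3.trans (by rw [mul_comm (y 0) (y 1), mul_comm (1 + y 0)])
      · exact h4.trans (by rw [mul_comm (y 0) (y 1)])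
    · fin_cases i <;> simp
  -- the piece where `cd` is invertible
  obtain ⟨n₃, hn₃⟩ : ∃ n : ℕ, (u 2 * u 3) ^ n * x = 0 := by
    have hm := middle_mem _ _ _ _ _ _
      (Algebra.adjoin ℂ (Set.range ![u 3 * u 4, u 2 * u 5]))
      (hmem ![u 3 * u 4, u 2 * u 5] 0) (hmem ![u 3 * u 4, u 2 * u 5] 1) r1 r2 r3 r4
    refine exists_pow_mul_eq_zero φ u hu ![u 3 * u 4, u 2 * u 5] ?_ _ hm.1
      (fun i => hm.2 _ (hlist i)) x hx
    have e0 := one_add_y_ne 0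
    have e1 := one_add_y_ne 1
    have e2 := one_add_y_add_ne 1 0
    have e2' : 1 + y 1 + y 1 * y 0 ≠ 0 := by
      rw [mul_comm (y 1)]; exact e2
    have e3' := one_add_y_add_ne 0 1
    have e3 : 1 + y 0 + y 0 * y 1 ≠ 0 := by
      rw [mul_comm (y 0)]; exact e3'
    refine algebraicIndependent_middle _ (Fin.forall_fin_two.2 ⟨?_, ?_⟩)
    · change φ (u 3 * u 4) = _
      rw [map_mul, h3, h4]; field_simp
    · change φ (u 2 * u 5) = _
      rw [map_mul, h2, h5]; field_simp
  -- the radical of the annihilator of `x` contains `bd`, `ac`, `cd`, hence `1`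
  let J : Ideal A := Ideal.span {x}|>.annihilator.radical
  have hJ : ∀ (s : A) (n : ℕ), s ^ n * x = 0 → s ∈ J := fun s n h =>
    ⟨n, Submodule.mem_annihilator_span_singleton _ _ |>.2 h⟩
  have hJp : ∀ (s : A) (n : ℕ), s ^ n ∈ J → s ∈ J := fun s n h =>
    (Ideal.radical_isRadical _) ⟨n, h⟩
  have j1 : u 1 * u 3 ∈ J := hJp _ 3 <| by
    have : (u 1 * u 3) ^ 3 = u 1 * (u 1 ^ 2 * u 3 ^ 3) := by ring
    rw [this]
    exact J.mul_mem_left _ (hJ _ _ hn₁)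
  have j2 : u 0 * u 2 ∈ J := hJp _ 3 <| by
    have : (u 0 * u 2) ^ 3 = u 0 * (u 0 ^ 2 * u 2 ^ 3) := by ring
    rw [this]
    exact J.mul_mem_left _ (hJ _ _ hn₂)
  have j3 : u 2 * u 3 ∈ J := hJ _ _ hn₃
  have j : (1 : A) ∈ J := by
    have : (1 : A) = (u 4 * u 5) * (u 2 * u 3) + (u 3 * u 4) * (u 1 * u 3) + u 0 * u 2 := by
      linear_combination (-u 3 * u 4) * r4 - r3
    rw [this]
    exact add_mem (add_mem (J.mul_mem_left _ j3) (J.mul_mem_left _ j1)) j2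
  obtain ⟨n, hn⟩ := j
  have := (Submodule.mem_annihilator_span_singleton _ _).1 hn
  simpa using this

lemma I_le_ker : I ≤ RingHom.ker (aeval v : MvPolynomial (Fin 6) ℂ →ₐ[ℂ] K) := by
  have e0 := one_add_y_ne 0
  have e1 := one_add_y_ne 1
  have e2 := one_add_y_add_ne 1 0
  have e2' : 1 + y 1 + y 1 * y 0 ≠ 0 := by
    rw [mul_comm (y 1)]; exact e2
  have e3' := one_add_y_add_ne 0 1
  have e3 : 1 + y 0 + y 0 * y 1 ≠ 0 := by
    rw [mul_comm (y 0)]; exact e3'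
  have h0 : v 0 = (1 + y 1) / (1 + y 1 + y 0 * y 1) := rfl
  have h1 : v 1 = (1 + y 0) / (1 + y 0 + y 0 * y 1) := rfl
  have h2 : v 2 = (1 + y 1 + y 0 * y 1) / ((1 + y 0) * (1 + y 1)) := rfl
  have h3 : v 3 = (1 + y 0 + y 0 * y 1) / ((1 + y 0) * (1 + y 1)) := rfl
  have h4 : v 4 = (y 0 + y 0 * y 1) / (1 + y 0 + y 0 * y 1) := rfl
  have h5 : v 5 = (y 1 + y 0 * y 1) / (1 + y 1 + y 0 * y 1) := rfl
  have q3 : v 0 * v 2 + v 3 * v 4 = 1 := by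
    rw [h0, h2, h3, h4]; field_simp
  have q4 : v 1 * v 3 + v 2 * v 5 = 1 := by
    rw [h1, h2, h3, h5]; field_simp
  have q1 : v 0 + v 3 * v 4 * v 5 = 1 := by
    rw [h0, h3, h4, h5]; field_simp
  have q2 : v 1 + v 2 * v 4 * v 5 = 1 := by
    rw [h1, h2, h4, h5]; field_simp
  rw [I, Ideal.span_le]
  rintro g (rfl | rfl | rfl | rfl) <;>
    simp only [SetLike.mem_coe, RingHom.mem_ker, map_sub, map_add, map_mul, map_one, aeval_X]
  · linear_combination q1 + v 0 * q4
  · linear_combination q2 + v 1 * q3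
  · linear_combination q3
  · linear_combination q4

/-- The kernel of the parametrization map `ℂ[u₁,…,u₆] → ℂ(y₁,y₂)`, `uᵢ ↦ vᵢ`,
is exactly the ideal generated by the F̂-equation relations of the preprojective
algebra `Π_{A₂}`; in particular this ideal is prime. -/
theorem ker_aeval_v_eq_Fhat_ideal :
    RingHom.ker (aeval v : MvPolynomial (Fin 6) ℂ →ₐ[ℂ] K) = I ∧ I.IsPrime := by
  have hker : RingHom.ker (aeval v : MvPolynomial (Fin 6) ℂ →ₐ[ℂ] K) = I := by
    refine le_antisymm (fun g hg => ?_) I_le_ker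
    let φ : (MvPolynomial (Fin 6) ℂ ⧸ I) →ₐ[ℂ] K := Ideal.Quotient.liftₐ I (aeval v) I_le_ker
    let π : MvPolynomial (Fin 6) ℂ →ₐ[ℂ] (MvPolynomial (Fin 6) ℂ ⧸ I) := Ideal.Quotient.mkₐ ℂ I
    have hφπ : ∀ g, φ (π g) = aeval v g := fun g => rfl
    have hgen : ∀ g ∈ ({X 0 * X 1 * X 3 + X 0 * X 2 * X 5 + X 3 * X 4 * X 5 - 1,
        X 0 * X 1 * X 2 + X 1 * X 3 * X 4 + X 2 * X 4 * X 5 - 1,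
        X 0 * X 2 + X 3 * X 4 - 1,
        X 1 * X 3 + X 2 * X 5 - 1} : Set (MvPolynomial (Fin 6) ℂ)), π g = 0 := fun g hg =>
      Ideal.Quotient.eq_zero_iff_mem.2 (Ideal.subset_span hg)
    simp only [Set.mem_insert_iff, Set.mem_singleton_iff, forall_eq_or_imp, forall_eq,
      map_sub, map_add, map_mul, map_one] at hgen
    obtain ⟨s1, s2, s3, s4⟩ := hgen
    have hu : Algebra.adjoin ℂ (Set.range fun i => π (X i)) = ⊤ := by
      have : (Set.range fun i => π (X i)) = π '' Set.range X := by
        rw [← Set.range_comp]; rfl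
      rw [this, ← AlgHom.map_adjoin, adjoin_range_X, Algebra.map_top, AlgHom.range_eq_top]
      exact Ideal.Quotient.mk_surjective
    refine Ideal.Quotient.eq_zero_iff_mem.1 ?_
    refine eq_zero_of_map_eq_zero φ (fun i => π (X i)) hu
      (fun i => (hφπ (X i)).trans (aeval_X v i)) ?_ ?_ ?_ ?_ (π g) ((hφπ g).trans hg)
    · linear_combination s1 - π (X 0) * s4
    · linear_combination s2 - π (X 1) * s3
    · linear_combination s3
    · linear_combination s4
  exact ⟨hker, hker ▸ RingHom.ker_isPrime _⟩

end PreprojectiveA2Kernel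
end
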